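/- Let F be a Minkowski norm on ℝⁿ, let Ω ⊆ ℝⁿ be an open set with smooth boundary such that Ω^c is bounded, let 1 < p < n, and let u_p be the C¹ weak solution of div(F(∇u)^{p−1} F_ξ(∇u)) = F(∇u)^p in Ω with u_p = 0 on ∂Ω and u_p → +∞ at infinity. If x ∈ ∂Ω and there is a Wulff shape W_r(x₀) ⊆ Ω^c with x ∈ ∂W_r(x₀), then F(∇u_p(x)) ≤ (n−p)/r. -/

import Mathlib

open MeasureTheory Filter Topology Metric Set
open scoped RealInnerProductSpace NNReal

noncomputable section

abbrev En (n : ℕ) := EuclideanSpace ℝ (Fin n)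

/-- A Minkowski norm on ℝⁿ: a norm (convex, even, 1-homogeneous, positive away from 0)
which is smooth away from the origin and whose Hessian of `F²/2` is positive definite
on `ℝⁿ \ {0}`. -/
structure MinkowskiNorm (n : ℕ) where
  F : En n → ℝ
  convexOn : ConvexOn ℝ Set.univ F
  even : ∀ ξ, F (-ξ) = F ξ
  homog : ∀ c : ℝ, 0 ≤ c → ∀ ξ, F (c • ξ) = c * F ξ
  pos : ∀ ξ : En n, ξ ≠ 0 → 0 < F ξ
  smooth : ContDiffOn ℝ (⊤ : ℕ∞) F {(0 : En n)}ᶜ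
  elliptic : ∀ ξ : En n, ξ ≠ 0 → ∀ v : En n, v ≠ 0 →
    0 < fderiv ℝ (fun x => fderiv ℝ (fun y => F y ^ 2 / 2) x) ξ v v

/-- Locally Lipschitz on a set (i.e. `C^{0,1}_loc`). -/
def LocLipOn {n : ℕ} (f : En n → ℝ) (s : Set (En n)) : Prop :=
  ∀ x ∈ s, ∃ (K : ℝ≥0) (t : Set (En n)), t ∈ nhdsWithin x s ∧ LipschitzOnWith K f t

/-- Weak solution of `div(F_ξ(∇u)) = F(∇u)` in `Ω` in the sense of Huisken–Ilmanen's
minimization principle. -/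
def IsWeakSolIAMCF {n : ℕ} (N : MinkowskiNorm n) (Ω : Set (En n)) (u : En n → ℝ) : Prop :=
  LocLipOn u Ω ∧
  ∀ K : Set (En n), IsCompact (closure K) → closure K ⊆ Ω →
    ∀ φ : En n → ℝ, LocLipOn φ Ω → (∀ x ∈ Ω \ K, φ x = u x) →
      (∫ x in K, (N.F (gradient u x) + u x * N.F (gradient u x))) ≤
        ∫ x in K, (N.F (gradient φ x) + φ x * N.F (gradient u x))

/-- Weak subsolution: the minimization inequality holds for competitors `φ ≤ u`. -/
def IsWeakSubSolIAMCF {n : ℕ} (N : MinkowskiNorm n) (Ω : Set (En n)) (u : En n → ℝ) : Prop :=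
  LocLipOn u Ω ∧
  ∀ K : Set (En n), IsCompact (closure K) → closure K ⊆ Ω →
    ∀ φ : En n → ℝ, LocLipOn φ Ω → (∀ x ∈ Ω \ K, φ x = u x) → (∀ x ∈ Ω, φ x ≤ u x) →
      (∫ x in K, (N.F (gradient u x) + u x * N.F (gradient u x))) ≤
        ∫ x in K, (N.F (gradient φ x) + φ x * N.F (gradient u x))

/-- Weak supersolution: the minimization inequality holds for competitors `φ ≥ u`. -/
def IsWeakSuperSolIAMCF {n : ℕ} (N : MinkowskiNorm n) (Ω : Set (En n)) (u : En n → ℝ) : Prop :=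
  LocLipOn u Ω ∧
  ∀ K : Set (En n), IsCompact (closure K) → closure K ⊆ Ω →
    ∀ φ : En n → ℝ, LocLipOn φ Ω → (∀ x ∈ Ω \ K, φ x = u x) → (∀ x ∈ Ω, u x ≤ φ x) →
      (∫ x in K, (N.F (gradient u x) + u x * N.F (gradient u x))) ≤
        ∫ x in K, (N.F (gradient φ x) + φ x * N.F (gradient u x))

/-- A smooth compactly supported test function on `Ω`. -/
def IsTestFun {n : ℕ} (Ω : Set (En n)) (ψ : En n → ℝ) : Prop :=
  ContDiff ℝ (⊤ : ℕ∞) ψ ∧ HasCompactSupport ψ ∧ tsupport ψ ⊆ Ω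

/-- Weak solution of the Finsler `p`-Laplace equation `div(F(∇v)^{p-1} F_ξ(∇v)) = 0` in `Ω`. -/
def IsWeakPHarmonic {n : ℕ} (N : MinkowskiNorm n) (Ω : Set (En n)) (p : ℝ)
    (v : En n → ℝ) : Prop :=
  ∀ ψ : En n → ℝ, IsTestFun Ω ψ →
    (∫ x in Ω, N.F (gradient v x) ^ (p - 1) *
      ⟪gradient N.F (gradient v x), gradient ψ x⟫) = 0

/-- Weak solution of `div(F(∇u)^{p-1} F_ξ(∇u)) = F(∇u)^p` in `Ω`. -/
def IsWeakPSol {n : ℕ} (N : MinkowskiNorm n) (Ω : Set (En n)) (p : ℝ)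
    (u : En n → ℝ) : Prop :=
  ∀ ψ : En n → ℝ, IsTestFun Ω ψ →
    (∫ x in Ω, N.F (gradient u x) ^ (p - 1) *
      ⟪gradient N.F (gradient u x), gradient ψ x⟫) =
      - ∫ x in Ω, N.F (gradient u x) ^ p * ψ x

/-- The polar (dual) norm `F^o(x) = sup_{ξ ≠ 0} ⟨ξ, x⟩ / F(ξ)`. -/
def polarF {n : ℕ} (N : MinkowskiNorm n) (x : En n) : ℝ :=
  sSup {c : ℝ | ∃ ξ : En n, ξ ≠ 0 ∧ c = ⟪ξ, x⟫ / N.F ξ}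

/-- The Wulff shape of radius `r` centered at `x₀`: `{x : F^o(x - x₀) < r}`. -/
def Wulff {n : ℕ} (N : MinkowskiNorm n) (r : ℝ) (x₀ : En n) : Set (En n) :=
  {x | polarF N (x - x₀) < r}

/-- `Ω` is an open set with smooth boundary: it is a smooth sublevel set of a smooth
function with nonvanishing gradient on the boundary. -/
def HasSmoothBoundary {n : ℕ} (Ω : Set (En n)) : Prop :=
  ∃ f : En n → ℝ, ContDiff ℝ (⊤ : ℕ∞) f ∧ Ω = {x | f x < 0} ∧
    ∀ x ∈ frontier Ω, fderiv ℝ f x ≠ 0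

/-- `C¹` on `s` with locally Hölder continuous gradient (i.e. `C^{1,α}_loc`). -/
def C1LocHolderOn {n : ℕ} (v : En n → ℝ) (s : Set (En n)) : Prop :=
  ContDiffOn ℝ 1 v s ∧
  ∀ x ∈ s, ∃ (α C : ℝ≥0), 0 < α ∧ (α : ℝ) ≤ 1 ∧
    ∃ t ∈ nhdsWithin x s, HolderOnWith C α (fun y => gradient v y) t

/-- Divergence of a vector field on `ℝⁿ`. -/
def divg {n : ℕ} (V : En n → En n) (x : En n) : ℝ :=
  ∑ i : Fin n, fderiv ℝ V x (EuclideanSpace.single i 1) i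

/-!
The substitution `v = exp (-u / (p - 1))` turns the equation for `u` into the Finsler `p`-Laplace
equation for `v`, whose positive radial solution about `x₀`, normalized to be `1` on the boundary of
the Wulff shape, is `(F^o(y - x₀) / r) ^ (-(n - p) / (p - 1))`. Comparing `v` with this solution and
with the constant `1` gives `0 ≤ u(y) ≤ (n - p) log (F^o(y - x₀) / r)` on `Ω`, with equality at the
boundary point `x`. The gradients at `x` of `u` and of the difference of the two sides are therefore
nonnegative multiples of the inner normal, so `F(∇u(x))` is at most the `F`-length of the gradient
of the barrier, which is `(n - p) / r`.
-/

/-! ### Test functions and weak equations -/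

section TestFunctions

open scoped Convolution ContDiff

variable {E : Type*} [NormedAddCommGroup E] [NormedSpace ℝ E]

/-- The test functions of class `C^k` on `Ω`: the weak equations are given for `k = ∞`, where this
notion is `IsTestFun`, but have to be tested against functions that are only `C¹`. -/
structure IsTestFunOfClass (k : ℕ∞ω) (Ω : Set E) (φ : E → ℝ) : Prop where
  contDiff : ContDiff ℝ k φ
  hasCompactSupport : HasCompactSupport φ
  tsupport_subset : tsupport φ ⊆ Ω

namespace IsTestFunOfClass

variable {j k : ℕ∞ω} {Ω K : Set E} {φ : E → ℝ}

theorem of_le (hφ : IsTestFunOfClass k Ω φ) (h : j ≤ k) : IsTestFunOfClass j Ω φ :=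
  ⟨hφ.contDiff.of_le h, hφ.hasCompactSupport, hφ.tsupport_subset⟩

theorem of_contDiffOn (hΩ : IsOpen Ω) (hK : IsCompact K) (hKΩ : K ⊆ Ω) (hφ : ContDiffOn ℝ k φ Ω)
    (h0 : ∀ y ∉ K, φ y = 0) : IsTestFunOfClass k Ω φ := by
  have hsupp : tsupport φ ⊆ K :=
    closure_minimal (Function.support_subset_iff'.mpr h0) hK.isClosed
  refine ⟨contDiff_iff_contDiffAt.mpr fun y => ?_,
    hK.of_isClosed_subset (isClosed_tsupport _) hsupp, hsupp.trans hKΩ⟩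
  by_cases hy : y ∈ K
  · exact hφ.contDiffAt (hΩ.mem_nhds (hKΩ hy))
  · exact (contDiffAt_const (c := (0 : ℝ))).congr_of_eventuallyEq <| by
      filter_upwards [hK.isClosed.isOpen_compl.mem_nhds hy] with z hz using h0 z hz

theorem mul_left (hΩ : IsOpen Ω) (hφ : IsTestFunOfClass k Ω φ) {f : E → ℝ}
    (hf : ContDiffOn ℝ k f Ω) : IsTestFunOfClass k Ω fun y => f y * φ y :=
  of_contDiffOn hΩ hφ.hasCompactSupport hφ.tsupport_subset (hf.mul hφ.contDiff.contDiffOn)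
    fun y hy => by rw [image_eq_zero_of_notMem_tsupport hy, mul_zero]

end IsTestFunOfClass

theorem exists_contDiff_forall_sub_le [FiniteDimensional ℝ E] {φ : E → ℝ} (hφ : ContDiff ℝ 1 φ)
    (hcs : HasCompactSupport φ) {ρ δ : ℝ} (hρ : 0 < ρ) (hδ : 0 < δ) :
    ∃ ψ : E → ℝ, ContDiff ℝ ∞ ψ ∧ tsupport ψ ⊆ cthickening ρ (tsupport φ) ∧
      (∀ y, |ψ y - φ y| ≤ δ) ∧ ∀ y V, |fderiv ℝ ψ y V - fderiv ℝ φ y V| ≤ δ * ‖V‖ := by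
  have hdφ := hφ.continuous_fderiv one_ne_zero
  obtain ⟨s₁, hs₁, h₁⟩ := Metric.uniformContinuous_iff.mp
    (hcs.uniformContinuous_of_continuous hφ.continuous) δ hδ
  obtain ⟨s₂, hs₂, h₂⟩ := Metric.uniformContinuous_iff.mp
    ((hcs.fderiv (𝕜 := ℝ)).uniformContinuous_of_continuous hdφ) δ hδ
  let _ : MeasurableSpace E := borel E
  have : BorelSpace E := ⟨rfl⟩
  let μ : Measure E := Measure.addHaar
  have hs : 0 < min ρ (min s₁ s₂) := lt_min hρ (lt_min hs₁ hs₂)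
  let f : ContDiffBump (0 : E) := ⟨min ρ (min s₁ s₂) / 2, _, half_pos hs, half_lt_self hs⟩
  have hf : LocallyIntegrable (f.normed μ) μ := f.continuous_normed.locallyIntegrable
  have hball : ∀ {y z : E}, z ∈ ball y f.rOut → dist z y < s₁ ∧ dist z y < s₂ := fun hz =>
    lt_min_iff.mp ((mem_ball.mp hz).trans_le (min_le_right _ _))
  refine ⟨f.normed μ ⋆[ContinuousLinearMap.lsmul ℝ ℝ, μ] φ,
    f.hasCompactSupport_normed.contDiff_convolution_left _ f.contDiff_normed
      hφ.continuous.locallyIntegrable, ?_, fun y => ?_, fun y V => ?_⟩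
  · refine closure_minimal ((support_convolution_subset_swap _).trans ?_) isClosed_cthickening
    rintro _ ⟨a, ha, b, hb, rfl⟩
    rw [f.support_normed_eq, mem_ball_zero_iff] at hb
    refine thickening_subset_cthickening _ _ (mem_thickening_iff.mpr ⟨a, subset_tsupport _ ha, ?_⟩)
    simpa [dist_eq_norm] using hb.trans_le (min_le_left _ _)
  · exact f.dist_normed_convolution_le hφ.continuous.aestronglyMeasurable
      fun z hz => (h₁ (hball hz).1).le
  · rw [(hcs.hasFDerivAt_convolution_right (ContinuousLinearMap.lsmul ℝ ℝ) hf hφ y).fderiv,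
      convolution_precompR_apply _ hf (hcs.fderiv (𝕜 := ℝ)) hdφ]
    refine f.dist_normed_convolution_le (g := fun a => fderiv ℝ φ a V)
      (hdφ.clm_apply continuous_const).aestronglyMeasurable fun z hz => ?_
    have hclose := (h₂ (hball hz).2).le
    rw [dist_eq_norm] at hclose ⊢
    exact ((fderiv ℝ φ z - fderiv ℝ φ y).le_opNorm V).trans (by gcongr)

variable [MeasurableSpace E] [BorelSpace E] {μ : Measure E} [IsFiniteMeasureOnCompacts μ]
  {Ω : Set E} {B : E → E} {h φ ψ : E → ℝ}

theorem IsTestFunOfClass.integrable_fderiv_apply_add_mul (hφ : IsTestFunOfClass 1 Ω φ)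
    (hB : ContinuousOn B Ω) (hh : ContinuousOn h Ω) :
    Integrable (fun x => fderiv ℝ φ x (B x) + h x * φ x) μ := by
  have hcont : ContinuousOn (fun x => fderiv ℝ φ x (B x) + h x * φ x) (tsupport φ) :=
    ((hφ.contDiff.continuous_fderiv one_ne_zero).continuousOn.clm_apply
      (hB.mono hφ.tsupport_subset)).add
      ((hh.mono hφ.tsupport_subset).mul hφ.contDiff.continuous.continuousOn)
  refine (integrableOn_iff_integrable_of_support_subset ?_).mp
    (hcont.integrableOn_compact hφ.hasCompactSupport)
  refine Function.support_subset_iff'.mpr fun y hy => ?_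
  simp [fderiv_of_notMem_tsupport ℝ hy, image_eq_zero_of_notMem_tsupport hy]

theorem norm_setIntegral_fderiv_apply_add_mul_sub_le (hΩ : IsOpen Ω) (hB : ContinuousOn B Ω)
    (hh : ContinuousOn h Ω) {K : Set E} (hK : IsCompact K) (hKΩ : K ⊆ Ω) (hφK : tsupport φ ⊆ K)
    (hψK : tsupport ψ ⊆ K)
    {δ : ℝ} (hval : ∀ y, |ψ y - φ y| ≤ δ)
    (hderiv : ∀ y V, |fderiv ℝ ψ y V - fderiv ℝ φ y V| ≤ δ * ‖V‖) :
    ‖∫ x in Ω, ((fderiv ℝ ψ x (B x) + h x * ψ x) - (fderiv ℝ φ x (B x) + h x * φ x)) ∂μ‖ ≤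
      δ * ∫ x in K, (‖B x‖ + |h x|) ∂μ := by
  have hint : IntegrableOn (fun x => ‖B x‖ + |h x|) K μ :=
    ((hB.mono hKΩ).norm.add (hh.mono hKΩ).abs).integrableOn_compact hK
  rw [setIntegral_eq_of_subset_of_forall_sdiff_eq_zero hΩ.measurableSet hKΩ,
    ← integral_const_mul]
  · refine norm_integral_le_of_norm_le (hint.const_mul δ) (Eventually.of_forall fun x => ?_)
    calc ‖(fderiv ℝ ψ x (B x) + h x * ψ x) - (fderiv ℝ φ x (B x) + h x * φ x)‖
        = |(fderiv ℝ ψ x (B x) - fderiv ℝ φ x (B x)) + (ψ x - φ x) * h x| := by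
          rw [Real.norm_eq_abs]; ring_nf
      _ ≤ |fderiv ℝ ψ x (B x) - fderiv ℝ φ x (B x)| + |ψ x - φ x| * |h x| :=
          (abs_add_le _ _).trans_eq (by rw [abs_mul])
      _ ≤ δ * ‖B x‖ + δ * |h x| := by gcongr; exacts [hderiv x _, hval x]
      _ = δ * (‖B x‖ + |h x|) := by ring
  · intro y hy
    have hyφ : y ∉ tsupport φ := fun hs => hy.2 (hφK hs)
    have hyψ : y ∉ tsupport ψ := fun hs => hy.2 (hψK hs)
    simp [fderiv_of_notMem_tsupport ℝ hyφ, image_eq_zero_of_notMem_tsupport hyφ,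
      fderiv_of_notMem_tsupport ℝ hyψ, image_eq_zero_of_notMem_tsupport hyψ]

theorem IsTestFunOfClass.setIntegral_eq_zero_of_smooth [FiniteDimensional ℝ E] (hΩ : IsOpen Ω)
    (hB : ContinuousOn B Ω) (hh : ContinuousOn h Ω)
    (hsmooth : ∀ ψ, IsTestFunOfClass ∞ Ω ψ →
      ∫ x in Ω, (fderiv ℝ ψ x (B x) + h x * ψ x) ∂μ = 0) (hφ : IsTestFunOfClass 1 Ω φ) :
    ∫ x in Ω, (fderiv ℝ φ x (B x) + h x * φ x) ∂μ = 0 := by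
  obtain ⟨ρ, hρ, hρΩ⟩ :=
    hφ.hasCompactSupport.isCompact.exists_cthickening_subset_open hΩ hφ.tsupport_subset
  set K := cthickening ρ (tsupport φ)
  have hK : IsCompact K := hφ.hasCompactSupport.isCompact.cthickening
  set C := ∫ x in K, (‖B x‖ + |h x|) ∂μ
  have hbound : ∀ δ > 0, ‖∫ x in Ω, (fderiv ℝ φ x (B x) + h x * φ x) ∂μ‖ ≤ δ * C := by
    intro δ hδ
    obtain ⟨ψ, hψ, hψK, hval, hderiv⟩ :=
      exists_contDiff_forall_sub_le hφ.contDiff hφ.hasCompactSupport hρ hδ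
    have hψΩ : IsTestFunOfClass ∞ Ω ψ :=
      ⟨hψ, hK.of_isClosed_subset (isClosed_tsupport _) hψK, hψK.trans hρΩ⟩
    have hψ₁ : IsTestFunOfClass 1 Ω ψ := hψΩ.of_le (by simp)
    have hdiff := norm_setIntegral_fderiv_apply_add_mul_sub_le (μ := μ) hΩ hB hh hK
      hρΩ (self_subset_cthickening _) hψK hval hderiv
    rwa [integral_sub (hψ₁.integrable_fderiv_apply_add_mul hB hh).integrableOn
      (hφ.integrable_fderiv_apply_add_mul hB hh).integrableOn, hsmooth ψ hψΩ, zero_sub,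
      norm_neg] at hdiff
  have hlim : Tendsto (fun δ : ℝ => δ * C) (𝓝[>] 0) (𝓝 0) := by
    simpa using (tendsto_id.mul_const C).mono_left (nhdsWithin_le_nhds (a := (0 : ℝ)))
  exact norm_le_zero_iff.mp (ge_of_tendsto hlim (eventually_mem_nhdsWithin.mono hbound))

end TestFunctions

section Gradient

variable {E : Type*} [NormedAddCommGroup E] [InnerProductSpace ℝ E] [CompleteSpace E]
  {f : E → ℝ} {s : Set E} {x : E}

theorem continuousOn_gradient_of_isOpen (hs : IsOpen s) (hf : ContDiffOn ℝ 1 f s) :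
    ContinuousOn (gradient f) s :=
  (InnerProductSpace.toDual ℝ E).symm.continuous.comp_continuousOn
    (hf.continuousOn_fderiv_of_isOpen hs le_rfl)

theorem hasGradientAt_of_contDiffOn (hs : IsOpen s) (hf : ContDiffOn ℝ 1 f s) (hx : x ∈ s) :
    HasGradientAt f (gradient f x) x :=
  ((hf.differentiableOn one_ne_zero).differentiableAt (hs.mem_nhds hx)).hasGradientAt

theorem hasGradientAt_comp {f' : E} {g : ℝ → ℝ} {g' : ℝ} (hg : HasDerivAt g g' (f x))
    (hf : HasGradientAt f f' x) : HasGradientAt (fun y => g (f y)) (g' • f') x := by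
  rw [hasGradientAt_iff_hasFDerivAt, map_smul]
  exact hg.comp_hasFDerivAt x hf.hasFDerivAt

theorem hasGradientAt_of_continuousAt_subgradient {g : E → E} (hg : ContinuousAt g x)
    (hsub : ∀ y z, ⟪g y, z - y⟫ ≤ f z - f y) : HasGradientAt f (g x) x := by
  refine hasGradientAt_iff_isLittleO.mpr (Asymptotics.isLittleO_iff.mpr fun c hc => ?_)
  filter_upwards [Metric.continuousAt_iff'.mp hg c hc] with y hy
  have hxy := hsub x y
  have hyx : f y - f x ≤ ⟪g y, y - x⟫ := by
    have := hsub y x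
    rw [← neg_sub y x, inner_neg_right] at this
    linarith
  calc ‖f y - f x - ⟪g x, y - x⟫‖ = f y - f x - ⟪g x, y - x⟫ :=
        Real.norm_of_nonneg (sub_nonneg.mpr hxy)
    _ ≤ ⟪g y - g x, y - x⟫ := by rw [inner_sub_left]; linarith
    _ ≤ ‖g y - g x‖ * ‖y - x‖ := real_inner_le_norm _ _
    _ ≤ c * ‖y - x‖ := by gcongr; exact (mem_ball_iff_norm.mp hy).le

end Gradient

/-! ### Comparison of weak solutions -/

section Comparison

variable {E : Type*} [NormedAddCommGroup E] [InnerProductSpace ℝ E] [CompleteSpace E]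
  {Ω : Set E} {v₁ v₂ : E → ℝ}

theorem exists_isTestFunOfClass_truncation (hΩ : IsOpen Ω) (h₁ : ContDiffOn ℝ 1 v₁ Ω)
    (h₂ : ContDiffOn ℝ 1 v₂ Ω) {K : Set E} (hK : IsCompact K) (hKΩ : K ⊆ Ω)
    (hlt : ∀ y ∈ Ω \ K, v₁ y ≤ v₂ y) :
    ∃ φ : E → ℝ, IsTestFunOfClass 1 Ω φ ∧ 0 ≤ φ ∧ (∀ y ∈ Ω, φ y = 0 → v₁ y ≤ v₂ y) ∧
      ∀ y ∈ Ω, ∃ c ≥ (0 : ℝ), gradient φ y = c • (gradient v₁ y - gradient v₂ y) := by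
  have hφ : EqOn (Ω.indicator fun z => expNegInvGlue (v₁ z - v₂ z))
      (fun z => expNegInvGlue (v₁ z - v₂ z)) Ω := eqOn_indicator
  refine ⟨Ω.indicator fun z => expNegInvGlue (v₁ z - v₂ z),
    .of_contDiffOn hΩ hK hKΩ ((expNegInvGlue.contDiff.comp_contDiffOn (h₁.sub h₂)).congr hφ) ?_,
    indicator_nonneg fun _ _ => expNegInvGlue.nonneg _, fun y hy h0 => ?_,
    fun y hy => ⟨deriv expNegInvGlue (v₁ y - v₂ y), expNegInvGlue.monotone.deriv_nonneg, ?_⟩⟩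
  · intro y hyK
    by_cases hy : y ∈ Ω
    · rw [hφ hy, expNegInvGlue.zero_iff_nonpos, sub_nonpos]
      exact hlt y ⟨hy, hyK⟩
    · exact indicator_of_notMem hy _
  · rwa [hφ hy, expNegInvGlue.zero_iff_nonpos, sub_nonpos] at h0
  · have hd : HasGradientAt (fun z => v₁ z - v₂ z) (gradient v₁ y - gradient v₂ y) y := by
      rw [hasGradientAt_iff_hasFDerivAt, map_sub]
      exact (hasGradientAt_of_contDiffOn hΩ h₁ hy).hasFDerivAt.sub
        (hasGradientAt_of_contDiffOn hΩ h₂ hy).hasFDerivAt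
    have hglue : HasDerivAt expNegInvGlue _ (v₁ y - v₂ y) :=
      (expNegInvGlue.contDiff (n := 1)).differentiable one_ne_zero _ |>.hasDerivAt
    rw [(hφ.eventuallyEq_of_mem (hΩ.mem_nhds hy)).gradient.eq_of_nhds,
      (hasGradientAt_comp (f := fun z => v₁ z - v₂ z) hglue hd).gradient]

variable [MeasurableSpace E] [BorelSpace E] {μ : Measure E} [IsFiniteMeasureOnCompacts μ]
  [μ.IsOpenPosMeasure]

theorem gradient_eq_zero_of_setIntegral_inner_nonpos (hΩ : IsOpen Ω) {A : E → E}
    (hA : Continuous A) (hmono : ∀ ξ η, ξ ≠ η → 0 < ⟪A ξ - A η, ξ - η⟫)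
    (h₁ : ContDiffOn ℝ 1 v₁ Ω) (h₂ : ContDiffOn ℝ 1 v₂ Ω) {φ : E → ℝ}
    (hφ : IsTestFunOfClass 1 Ω φ)
    (hgrad : ∀ y ∈ Ω, ∃ c ≥ (0 : ℝ), gradient φ y = c • (gradient v₁ y - gradient v₂ y))
    (hweak : ∫ x in Ω, ⟪A (gradient v₁ x) - A (gradient v₂ x), gradient φ x⟫ ∂μ ≤ 0) (y : E) :
    gradient φ y = 0 := by
  set B : E → E := fun x => A (gradient v₁ x) - A (gradient v₂ x)
  have hB : ContinuousOn B Ω :=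
    (hA.comp_continuousOn (continuousOn_gradient_of_isOpen hΩ h₁)).sub
      (hA.comp_continuousOn (continuousOn_gradient_of_isOpen hΩ h₂))
  have hint : Integrable (fun x => ⟪B x, gradient φ x⟫) μ := by
    simpa [inner_gradient_right] using
      hφ.integrable_fderiv_apply_add_mul (μ := μ) hB (continuousOn_const (c := 0))
  have hnonneg : ∀ x ∈ Ω, 0 ≤ ⟪B x, gradient φ x⟫ := fun x hx => by
    obtain ⟨c, hc, hgx⟩ := hgrad x hx
    rw [hgx, inner_smul_right]
    refine mul_nonneg hc ?_
    rcases eq_or_ne (gradient v₁ x) (gradient v₂ x) with heq | hne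
    · simp [heq]
    · exact (hmono _ _ hne).le
  have hzero : EqOn (fun x => ⟪B x, gradient φ x⟫) 0 Ω := by
    refine Measure.eqOn_open_of_ae_eq (μ := μ) ?_ hΩ
      (hB.inner (continuousOn_gradient_of_isOpen hΩ hφ.contDiff.contDiffOn)) continuousOn_const
    refine (setIntegral_eq_zero_iff_of_nonneg_ae ?_ hint.integrableOn).mp
      (hweak.antisymm (setIntegral_nonneg hΩ.measurableSet hnonneg))
    exact (ae_restrict_iff' hΩ.measurableSet).mpr (Eventually.of_forall hnonneg)
  by_cases hy : y ∈ Ω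
  · obtain ⟨c, -, hgy⟩ := hgrad y hy
    rcases eq_or_ne (gradient v₁ y) (gradient v₂ y) with heq | hne
    · rw [hgy, heq, sub_self, smul_zero]
    · have hzy : c * ⟪B y, gradient v₁ y - gradient v₂ y⟫ = 0 := by
        simpa only [hgy, inner_smul_right, Pi.zero_apply] using hzero hy
      rw [hgy, (mul_eq_zero_iff_right (hmono _ _ hne).ne').mp hzy, zero_smul]
  · rw [gradient, fderiv_of_notMem_tsupport ℝ fun h => hy (hφ.tsupport_subset h), map_zero]

theorem le_of_setIntegral_inner_nonpos_of_isCompact [NoncompactSpace E] (hΩ : IsOpen Ω) {A : E → E}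
    (hA : Continuous A) (hmono : ∀ ξ η, ξ ≠ η → 0 < ⟪A ξ - A η, ξ - η⟫)
    (h₁ : ContDiffOn ℝ 1 v₁ Ω) (h₂ : ContDiffOn ℝ 1 v₂ Ω)
    (hweak : ∀ φ : E → ℝ, IsTestFunOfClass 1 Ω φ → 0 ≤ φ →
      ∫ x in Ω, ⟪A (gradient v₁ x) - A (gradient v₂ x), gradient φ x⟫ ∂μ ≤ 0)
    {K : Set E} (hK : IsCompact K) (hKΩ : K ⊆ Ω) (hle : ∀ y ∈ Ω \ K, v₁ y ≤ v₂ y) :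
    ∀ y ∈ Ω, v₁ y ≤ v₂ y := by
  obtain ⟨φ, hφ, hφ0, hφle, hgrad⟩ := exists_isTestFunOfClass_truncation hΩ h₁ h₂ hK hKΩ hle
  have hconst : ∀ y z, φ y = φ z :=
    is_const_of_fderiv_eq_zero (hφ.contDiff.differentiable one_ne_zero) fun y => by
      rw [← toDual_gradient, gradient_eq_zero_of_setIntegral_inner_nonpos hΩ hA hmono h₁ h₂ hφ
        hgrad (hweak φ hφ hφ0), map_zero]
  obtain ⟨z, hz⟩ := (ne_univ_iff_exists_notMem _).mp hφ.hasCompactSupport.isCompact.ne_univ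
  exact fun y hy => hφle y hy ((hconst y z).trans (image_eq_zero_of_notMem_tsupport hz))

theorem le_of_setIntegral_inner_nonpos [NoncompactSpace E] (hΩ : IsOpen Ω) {A : E → E}
    (hA : Continuous A) (hmono : ∀ ξ η, ξ ≠ η → 0 < ⟪A ξ - A η, ξ - η⟫)
    (h₁ : ContDiffOn ℝ 1 v₁ Ω) (h₂ : ContDiffOn ℝ 1 v₂ Ω)
    (hc₁ : ContinuousOn v₁ (closure Ω)) (hc₂ : ContinuousOn v₂ (closure Ω))
    (hweak : ∀ φ : E → ℝ, IsTestFunOfClass 1 Ω φ → 0 ≤ φ →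
      ∫ x in Ω, ⟪A (gradient v₁ x) - A (gradient v₂ x), gradient φ x⟫ ∂μ ≤ 0)
    (hfrontier : ∀ y ∈ frontier Ω, v₁ y ≤ v₂ y)
    (hinfty : ∀ ε > 0, ∀ᶠ y in cocompact E ⊓ 𝓟 Ω, v₁ y ≤ v₂ y + ε) :
    ∀ y ∈ Ω, v₁ y ≤ v₂ y := by
  intro y hy
  refine le_of_forall_pos_le_add fun ε hε => ?_
  obtain ⟨S, hS, hSv⟩ := mem_cocompact.mp
    (eventually_inf_principal.mp (hinfty (ε / 2) (half_pos hε)))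
  set K := {z ∈ closure Ω | v₂ z + ε ≤ v₁ z}
  have hKΩ : K ⊆ Ω := fun z hz => by
    by_contra hzΩ
    linarith [hfrontier z (hΩ.frontier_eq ▸ ⟨hz.1, hzΩ⟩), hz.2]
  have hK : IsCompact K := by
    refine hS.of_isClosed_subset
      (isClosed_closure.isClosed_le (hc₂.add continuousOn_const) hc₁) fun z hz => ?_
    by_contra hzS
    linarith [hSv hzS (hKΩ hz), hz.2]
  refine le_of_setIntegral_inner_nonpos_of_isCompact (v₂ := fun z => v₂ z + ε) (μ := μ) hΩ hA hmono
    h₁ (h₂.add contDiffOn_const) (by simpa only [gradient, fderiv_add_const] using hweak) hK hKΩ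
    (fun z hz => ?_) y hy
  by_contra! hlt
  exact hz.2 ⟨subset_closure hz.1, hlt.le⟩

end Comparison

/-! ### Homogeneous vector fields -/

section Radial

variable {E : Type*} [NormedAddCommGroup E] [NormedSpace ℝ E] [FiniteDimensional ℝ E]
  [MeasurableSpace E] [BorelSpace E] {μ : Measure E} [μ.IsAddHaarMeasure] {Ω : Set E}

theorem integral_fderiv_apply_sub_add_finrank_mul {k : E → ℝ} (hk : ContDiff ℝ 1 k)
    (hcs : HasCompactSupport k) (x₀ : E) :
    ∫ y, (fderiv ℝ k y (y - x₀) + Module.finrank ℝ E * k y) ∂μ = 0 := by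
  set b := Module.finBasis ℝ E
  set coord : Fin (Module.finrank ℝ E) → E →L[ℝ] ℝ := fun i => (b.coord i).toContinuousLinearMap
  have hcoord : ∀ i y, HasFDerivAt (fun z => coord i (z - x₀)) (coord i) y := fun i y => by
    simpa only [map_sub] using (coord i).hasFDerivAt.sub_const (coord i x₀)
  have hcont : ∀ i, Continuous fun y => coord i (y - x₀) := fun i => by fun_prop
  have hderiv : ∀ i, Continuous fun y => fderiv ℝ k y (b i) := fun i =>
    (hk.continuous_fderiv one_ne_zero).clm_apply continuous_const
  have hint_k : Integrable k μ := hk.continuous.integrable_of_hasCompactSupport hcs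
  have hint : ∀ i, Integrable (fun y => coord i (y - x₀) * fderiv ℝ k y (b i)) μ := fun i =>
    ((hcont i).mul (hderiv i)).integrable_of_hasCompactSupport (hcs.fderiv_apply ℝ (b i)).mul_left
  have hparts : ∀ i, ∫ y, (coord i (y - x₀) * fderiv ℝ k y (b i) + k y) ∂μ = 0 := fun i => by
    have hone : ∀ y, fderiv ℝ (fun z => coord i (z - x₀)) y (b i) = 1 := fun y => by
      rw [(hcoord i y).fderiv]
      simp [coord]
    rw [integral_add (hint i) hint_k, integral_mul_fderiv_eq_neg_fderiv_mul_of_integrable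
      (by simpa only [hone, one_mul] using hint_k) (hint i)
      (((hcont i).mul hk.continuous).integrable_of_hasCompactSupport hcs.mul_left)
      (fun y _ => (hcoord i y).differentiableAt) (fun y _ => hk.differentiable one_ne_zero y)]
    simp only [hone, one_mul, neg_add_cancel]
  have hexpand : ∀ y, fderiv ℝ k y (y - x₀) + Module.finrank ℝ E * k y =
      ∑ i, (coord i (y - x₀) * fderiv ℝ k y (b i) + k y) := fun y => by
    conv_lhs => rw [← b.sum_repr (y - x₀)]
    simp [coord, map_sum, Finset.sum_add_distrib]
  have hint_add : ∀ i, Integrable (fun y => coord i (y - x₀) * fderiv ℝ k y (b i) + k y) μ :=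
    fun i => (hint i).add hint_k
  simp only [hexpand]
  rw [integral_finsetSum _ fun i _ => hint_add i]
  exact Finset.sum_eq_zero fun i _ => hparts i

/-- A field `h y • (y - x₀)` with `h` homogeneous of degree `-dim E` about `x₀` is divergence free:
the assumption on `fderiv` is Euler's identity for `h`. -/
theorem setIntegral_mul_fderiv_apply_sub_eq_zero (hΩ : IsOpen Ω) {h φ : E → ℝ} {x₀ : E}
    (hh : ContDiffOn ℝ 1 h Ω)
    (heuler : ∀ y ∈ Ω, fderiv ℝ h y (y - x₀) = -(Module.finrank ℝ E * h y))
    (hφ : IsTestFunOfClass 1 Ω φ) : ∫ y in Ω, h y * fderiv ℝ φ y (y - x₀) ∂μ = 0 := by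
  have hk : IsTestFunOfClass 1 Ω fun y => h y * φ y := hφ.mul_left hΩ hh
  calc ∫ y in Ω, h y * fderiv ℝ φ y (y - x₀) ∂μ
      = ∫ y in Ω, (fderiv ℝ (fun y => h y * φ y) y (y - x₀) +
          Module.finrank ℝ E * (h y * φ y)) ∂μ := by
        refine setIntegral_congr_fun hΩ.measurableSet fun y hy => ?_
        have hdh := (hh.differentiableOn one_ne_zero).differentiableAt (hΩ.mem_nhds hy)
        have hdφ := hφ.contDiff.differentiable one_ne_zero y
        simp only [fderiv_fun_mul hdh hdφ, add_apply, smul_apply, smul_eq_mul, heuler y hy]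
        ring
    _ = ∫ y, (fderiv ℝ (fun y => h y * φ y) y (y - x₀) +
          Module.finrank ℝ E * (h y * φ y)) ∂μ := by
        refine setIntegral_eq_integral_of_forall_compl_eq_zero fun y hy => ?_
        have hy' := fun hs => hy (hk.tsupport_subset hs)
        rw [fderiv_of_notMem_tsupport ℝ hy', image_eq_zero_of_notMem_tsupport hy']
        simp
    _ = 0 := integral_fderiv_apply_sub_add_finrank_mul hk.contDiff hk.hasCompactSupport x₀

end Radial

/-! ### Inner normals -/

section InnerNormal

variable {E : Type*} [NormedAddCommGroup E] [InnerProductSpace ℝ E] {s : Set E} {ν x : E}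

/-- `ν` is an inner normal of `s` at `x`, up to length: every direction pointing to the same side
as `ν` is tangent to `s`. -/
def IsInnerNormalAt (s : Set E) (ν x : E) : Prop :=
  ν ≠ 0 ∧ ∀ e, 0 < ⟪ν, e⟫ → e ∈ posTangentConeAt s x

theorem exists_nonneg_smul_eq_of_forall_inner_nonneg {G : E} (hν : ν ≠ 0)
    (h : ∀ e, 0 < ⟪ν, e⟫ → 0 ≤ ⟪G, e⟫) : ∃ l ≥ (0 : ℝ), G = l • ν := by
  have hνν : 0 < ⟪ν, ν⟫ := real_inner_self_pos.mpr hν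
  set l := ⟪G, ν⟫ / ⟪ν, ν⟫
  set w := G - l • ν
  have hνw : ⟪ν, w⟫ = 0 := by
    rw [inner_sub_right, inner_smul_right, real_inner_comm, div_mul_cancel₀ _ hνν.ne', sub_self]
  have hGw : ⟪G, w⟫ = ⟪w, w⟫ := by
    rw [inner_sub_left (x := G), inner_smul_left, hνw, mul_zero, sub_zero]
  refine ⟨l, div_nonneg (h ν hνν) hνν.le, sub_eq_zero.mp ?_⟩
  by_contra hw
  have hww : 0 < ⟪w, w⟫ := real_inner_self_pos.mpr hw
  have htest := h (ν - ((⟪G, ν⟫ + 1) / ⟪w, w⟫) • w) (by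
    rwa [inner_sub_right, inner_smul_right, hνw, mul_zero, sub_zero])
  rw [inner_sub_right, inner_smul_right, hGw, div_mul_cancel₀ _ hww.ne'] at htest
  linarith

variable [CompleteSpace E]

theorem IsInnerNormalAt.exists_gradient_eq_smul (hν : IsInnerNormalAt s ν x) {f : E → ℝ} {G : E}
    (hf : HasGradientWithinAt f G s x) (hmin : ∀ y ∈ s, f x ≤ f y) :
    ∃ l ≥ (0 : ℝ), G = l • ν := by
  refine exists_nonneg_smul_eq_of_forall_inner_nonneg hν.1 fun e he => ?_
  have hlocal : IsLocalMinOn f s x := eventually_nhdsWithin_of_forall hmin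
  exact hlocal.hasFDerivWithinAt_nonneg hf.hasFDerivWithinAt (hν.2 e he)

theorem isInnerNormalAt_neg_gradient {f : E → ℝ} {G : E} (hf : HasGradientAt f G x)
    (hx : f x = 0) (hG : G ≠ 0) : IsInnerNormalAt {y | f y < 0} (-G) x := by
  refine ⟨neg_ne_zero.mpr hG, fun e he => mem_posTangentConeAt_of_frequently_mem ?_⟩
  have hslope := (hf.hasFDerivAt.hasLineDerivAt e).tendsto_slope_zero_right
  have hneg : InnerProductSpace.toDual ℝ E G e < 0 := by
    rw [inner_neg_left] at he
    exact neg_pos.mp he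
  refine Eventually.frequently ?_
  filter_upwards [hslope.eventually_lt_const hneg, self_mem_nhdsWithin] with t hlt ht
  rw [hx, sub_zero, smul_eq_mul] at hlt
  exact (pos_iff_neg_of_mul_neg hlt).mp (inv_pos.mpr ht)

end InnerNormal

theorem HasSmoothBoundary.exists_isInnerNormalAt {n : ℕ} {Ω : Set (En n)}
    (hΩ : HasSmoothBoundary Ω) {x : En n} (hx : x ∈ frontier Ω) : ∃ ν, IsInnerNormalAt Ω ν x := by
  obtain ⟨f, hf, rfl, hdf⟩ := hΩ
  have hgrad : HasGradientAt f (gradient f x) x :=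
    (hf.differentiable (by simp) x).hasGradientAt
  refine ⟨_, isInnerNormalAt_neg_gradient hgrad
    (frontier_lt_subset_eq hf.continuous continuous_const hx) fun h0 => hdf x hx ?_⟩
  rw [← toDual_gradient, h0, map_zero]

/-! ### Minkowski norms -/

theorem fderiv_fderiv_apply_self_eq_zero {E : Type*} [NormedAddCommGroup E] [NormedSpace ℝ E]
    {G : E → ℝ} {x d : E} {c : ℝ} (hG : ContDiffAt ℝ 2 G x)
    (hc : ∀ᶠ t in 𝓝 (0 : ℝ), G (x + t • d) = c) : fderiv ℝ (fderiv ℝ G) x d d = 0 := by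
  have hline : ∀ t : ℝ, HasDerivAt (fun t : ℝ => x + t • d) d t := fun t => by
    simpa using ((hasDerivAt_id t).smul_const d).const_add x
  have hline0 : Tendsto (fun t : ℝ => x + t • d) (𝓝 0) (𝓝 x) := by
    simpa using (hline 0).continuousAt.tendsto
  have hdiff : ∀ᶠ y in 𝓝 x, DifferentiableAt ℝ G y :=
    (hG.eventually (by simp)).mono fun y hy => hy.differentiableAt two_ne_zero
  have hfirst : (fun t : ℝ => fderiv ℝ G (x + t • d) d) =ᶠ[𝓝 0] fun _ => 0 := by
    filter_upwards [hline0.eventually hdiff, hc.eventually_nhds] with t hdt hct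
    exact (hdt.hasFDerivAt.comp_hasDerivAt t (hline t)).unique
      ((hasDerivAt_const t c).congr_of_eventuallyEq hct)
  have hG' : DifferentiableAt ℝ (fderiv ℝ G) x :=
    (hG.fderiv_right (m := 1) (by norm_num)).differentiableAt one_ne_zero
  have hsecond : HasLineDerivAt ℝ (fun y => fderiv ℝ G y d) (fderiv ℝ (fderiv ℝ G) x d d) x d := by
    simpa using (hG'.hasFDerivAt.clm_apply (hasFDerivAt_const d x)).hasLineDerivAt d
  exact HasDerivAt.unique hsecond ((hasDerivAt_const 0 0).congr_of_eventuallyEq hfirst)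

namespace MinkowskiNorm

variable {n : ℕ} (N : MinkowskiNorm n)

theorem F_zero : N.F 0 = 0 := by
  simpa using N.homog 0 le_rfl 0

theorem F_nonneg (ξ : En n) : 0 ≤ N.F ξ := by
  rcases eq_or_ne ξ 0 with rfl | h
  · exact N.F_zero.ge
  · exact (N.pos ξ h).le

theorem F_smul (c : ℝ) (ξ : En n) : N.F (c • ξ) = |c| * N.F ξ := by
  rcases abs_choice c with h | h
  · rw [h, N.homog c (abs_eq_self.mp h)]
  · rw [← N.even, ← neg_smul, ← h, N.homog _ (abs_nonneg c)]

theorem F_add_le (ξ η : En n) : N.F (ξ + η) ≤ N.F ξ + N.F η := by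
  have h := N.convexOn.2 (mem_univ ξ) (mem_univ η) (inv_nonneg.mpr zero_le_two)
    (inv_nonneg.mpr zero_le_two) (by norm_num : (2⁻¹ : ℝ) + 2⁻¹ = 1)
  rw [← smul_add, N.homog _ (inv_nonneg.mpr zero_le_two), smul_eq_mul, smul_eq_mul] at h
  linarith

theorem continuous_F : Continuous N.F :=
  continuousOn_univ.mp (N.convexOn.continuousOn isOpen_univ)

theorem exists_F_le_mul_norm : ∃ C > 0, ∀ ξ, N.F ξ ≤ C * ‖ξ‖ :=
  (Seminorm.of N.F N.F_add_le N.F_smul).bound_of_continuous_normedSpace N.continuous_F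

theorem exists_norm_le_mul_F : ∃ C ≥ 0, ∀ ξ, ‖ξ‖ ≤ C * N.F ξ := by
  have hpos : ∀ z ∈ sphere (0 : En n) 1, N.F z ≠ 0 := fun z hz =>
    (N.pos z (ne_of_mem_sphere hz one_ne_zero)).ne'
  obtain ⟨C, hC⟩ := (isCompact_sphere (0 : En n) 1).exists_bound_of_continuousOn
    (N.continuous_F.continuousOn.inv₀ hpos)
  refine ⟨|C|, abs_nonneg C, fun ξ => ?_⟩
  rcases eq_or_ne ξ 0 with rfl | hξ
  · simp [N.F_zero]
  have hunit := hC (‖ξ‖⁻¹ • ξ) (by simp [norm_smul, hξ])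
  rw [Pi.inv_apply, N.homog _ (inv_nonneg.mpr (norm_nonneg ξ)), mul_inv, inv_inv,
    ← div_eq_mul_inv, Real.norm_of_nonneg (div_nonneg (norm_nonneg ξ) (N.F_nonneg ξ)),
    div_le_iff₀ (N.pos ξ hξ)] at hunit
  exact hunit.trans (mul_le_mul_of_nonneg_right (le_abs_self C) (N.F_nonneg ξ))

theorem contDiffAt_F {ξ : En n} (h : ξ ≠ 0) : ContDiffAt ℝ (⊤ : ℕ∞) N.F ξ :=
  N.smooth.contDiffAt (isOpen_compl_singleton.mem_nhds h)

theorem hasGradientAt_F {ξ : En n} (h : ξ ≠ 0) : HasGradientAt N.F (gradient N.F ξ) ξ :=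
  ((N.contDiffAt_F h).differentiableAt (by simp)).hasGradientAt

theorem continuousAt_gradient_F {ξ : En n} (h : ξ ≠ 0) : ContinuousAt (gradient N.F) ξ :=
  (continuousOn_gradient_of_isOpen isOpen_compl_singleton
    (N.smooth.of_le (mod_cast le_top))).continuousAt (isOpen_compl_singleton.mem_nhds h)

theorem smul_gradient_F_smul (c : ℝ) (ξ : En n) :
    c • gradient N.F (c • ξ) = |c| • gradient N.F ξ := by
  have h : c • fderiv ℝ N.F (c • ξ) = |c| • fderiv ℝ N.F ξ := by
    rw [← fderiv_comp_smul, ← Pi.smul_apply, ← fderiv_const_smul_field]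
    congr 1
    exact funext (N.F_smul c)
  rw [gradient, gradient, ← map_smul, h, map_smul]

theorem gradient_F_neg (ξ : En n) : gradient N.F (-ξ) = -gradient N.F ξ := by
  simpa [neg_eq_iff_eq_neg] using N.smul_gradient_F_smul (-1) ξ

theorem gradient_F_zero : gradient N.F 0 = 0 := by
  have : IsAddTorsionFree (En n) := .of_isTorsionFree ℝ _
  simpa only [neg_zero, self_eq_neg] using N.gradient_F_neg 0

theorem gradient_F_smul {c : ℝ} (hc : 0 < c) (ξ : En n) :
    gradient N.F (c • ξ) = gradient N.F ξ :=
  smul_right_injective _ hc.ne' (by simpa [abs_of_pos hc] using N.smul_gradient_F_smul c ξ)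

theorem inner_gradient_F_le (ξ η : En n) : ⟪gradient N.F ξ, η⟫ ≤ N.F η := by
  rcases eq_or_ne ξ 0 with rfl | h
  · simpa [N.gradient_F_zero] using N.F_nonneg η
  have hslope := ((N.hasGradientAt_F h).hasFDerivAt.hasLineDerivAt η).tendsto_slope_zero_right
  refine le_of_tendsto hslope (eventually_mem_nhdsWithin.mono fun t ht => ?_)
  rw [smul_eq_mul, inv_mul_le_iff₀ ht, sub_le_iff_le_add', ← N.homog t (le_of_lt ht)]
  exact N.F_add_le ξ (t • η)

theorem inner_gradient_F_self (ξ : En n) : ⟪gradient N.F ξ, ξ⟫ = N.F ξ := by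
  rcases eq_or_ne ξ 0 with rfl | h
  · rw [inner_zero_right, N.F_zero]
  have hslope := ((N.hasGradientAt_F h).hasFDerivAt.hasLineDerivAt ξ).tendsto_slope_zero_right
  refine tendsto_nhds_unique hslope (tendsto_const_nhds.congr' ?_)
  filter_upwards [self_mem_nhdsWithin] with t ht
  have ht0 : 0 < t := ht
  rw [show ξ + t • ξ = (1 + t) • ξ by module, N.homog (1 + t) (by positivity), smul_eq_mul]
  field_simp
  ring

theorem exists_norm_gradient_F_le : ∃ C > 0, ∀ ξ, ‖gradient N.F ξ‖ ≤ C := by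
  obtain ⟨C, hC, hF⟩ := N.exists_F_le_mul_norm
  refine ⟨C, hC, fun ξ => ?_⟩
  have h := (N.inner_gradient_F_le ξ (gradient N.F ξ)).trans (hF _)
  rw [real_inner_self_eq_norm_mul_norm] at h
  by_contra! hlt
  exact h.not_gt (mul_lt_mul_of_pos_right hlt (hC.trans hlt))

theorem F_half_smul_add_lt {ξ η : En n} (hF : N.F ξ = N.F η) (hne : ξ ≠ η) :
    N.F ((2⁻¹ : ℝ) • (ξ + η)) < N.F ξ := by
  set m := (2⁻¹ : ℝ) • (ξ + η)
  have hsegment : ∀ t : ℝ, |t| ≤ 2⁻¹ → N.F (m + t • (η - ξ)) ≤ N.F ξ := fun t ht => by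
    obtain ⟨ht₁, ht₂⟩ := abs_le.mp ht
    have hconv := N.convexOn.2 (mem_univ ξ) (mem_univ η) (by linarith : 0 ≤ 2⁻¹ - t)
      (by linarith : 0 ≤ 2⁻¹ + t) (by ring)
    rw [← hF, smul_eq_mul, smul_eq_mul] at hconv
    calc N.F (m + t • (η - ξ)) = N.F ((2⁻¹ - t) • ξ + (2⁻¹ + t) • η) := by congr 1; module
      _ ≤ N.F ξ := hconv.trans_eq (by ring)
  have hm_le : N.F m ≤ N.F ξ := by simpa using hsegment 0 (by norm_num)
  refine hm_le.lt_of_ne fun hm => ?_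
  have hξ : 0 < N.F ξ := by
    rcases eq_or_ne ξ 0 with rfl | hξ
    · exact hF ▸ N.pos η hne.symm
    · exact N.pos ξ hξ
  have hm0 : m ≠ 0 := fun h0 => by rw [h0, N.F_zero] at hm; exact hξ.ne hm
  have hconst : ∀ᶠ t in 𝓝 (0 : ℝ), N.F (m + t • (η - ξ)) ^ 2 / 2 = N.F ξ ^ 2 / 2 := by
    filter_upwards [eventually_abs_sub_lt 0 (by norm_num : (0 : ℝ) < 2⁻¹)] with t ht
    rw [sub_zero] at ht
    have hadd := N.F_add_le (m + t • (η - ξ)) (m + (-t) • (η - ξ))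
    rw [show m + t • (η - ξ) + (m + (-t) • (η - ξ)) = (2 : ℝ) • m by module,
      N.homog 2 zero_le_two, hm] at hadd
    have hle := hsegment (-t) (by rw [abs_neg]; exact ht.le)
    rw [(hsegment t ht.le).antisymm (by linarith)]
  have hsmooth : ContDiffAt ℝ 2 (fun y => N.F y ^ 2 / 2) m :=
    (((N.contDiffAt_F hm0).of_le (WithTop.coe_le_coe.mpr le_top)).pow 2).div_const 2
  exact (N.elliptic m hm0 (η - ξ) (sub_ne_zero.mpr hne.symm)).ne'
    (fderiv_fderiv_apply_self_eq_zero hsmooth hconst)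

theorem eq_of_inner_eq_mul_F {P : ℝ} (hP : 0 < P) {x ξ η : En n}
    (hle : ∀ ζ, ⟪ζ, x⟫ ≤ P * N.F ζ) (hF : N.F ξ = N.F η) (hξ : ⟪ξ, x⟫ = P * N.F ξ)
    (hη : ⟪η, x⟫ = P * N.F η) : ξ = η := by
  by_contra hne
  refine (hle ((2⁻¹ : ℝ) • (ξ + η))).not_gt ?_
  calc P * N.F ((2⁻¹ : ℝ) • (ξ + η)) < P * N.F ξ := by gcongr; exact N.F_half_smul_add_lt hF hne
    _ = ⟪(2⁻¹ : ℝ) • (ξ + η), x⟫ := by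
      rw [real_inner_smul_left, inner_add_left, hξ, hη, ← hF]; ring

theorem inner_gradient_F_lt {ξ η : En n} (hF : N.F ξ = N.F η) (hne : ξ ≠ η) :
    ⟪gradient N.F ξ, η⟫ < N.F η := by
  refine (N.inner_gradient_F_le ξ η).lt_of_ne fun heq => hne ?_
  refine N.eq_of_inner_eq_mul_F one_pos (x := gradient N.F ξ) (fun ζ => ?_) hF ?_ ?_
  · rw [one_mul, real_inner_comm]
    exact N.inner_gradient_F_le ξ ζ
  · rw [one_mul, real_inner_comm, N.inner_gradient_F_self]
  · rw [one_mul, real_inner_comm, heq]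

/-! ### The polar norm -/

theorem polarF_zero : polarF N 0 = 0 := by
  refine le_antisymm (Real.sSup_nonpos ?_) (Real.sSup_nonneg ?_) <;>
    · rintro _ ⟨ξ, -, rfl⟩
      rw [inner_zero_right, zero_div]

theorem inner_le_polarF_mul_F (ξ x : En n) : ⟪ξ, x⟫ ≤ polarF N x * N.F ξ := by
  rcases eq_or_ne ξ 0 with rfl | hξ
  · rw [inner_zero_left, N.F_zero, mul_zero]
  rw [← div_le_iff₀ (N.pos ξ hξ)]
  obtain ⟨C, -, hC⟩ := N.exists_norm_le_mul_F
  refine le_csSup ⟨C * ‖x‖, ?_⟩ ⟨ξ, hξ, rfl⟩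
  rintro _ ⟨η, hη, rfl⟩
  rw [div_le_iff₀ (N.pos η hη)]
  calc ⟪η, x⟫ ≤ ‖η‖ * ‖x‖ := real_inner_le_norm η x
    _ ≤ C * N.F η * ‖x‖ := by gcongr; exact hC η
    _ = C * ‖x‖ * N.F η := by ring

theorem polarF_pos {x : En n} (hx : x ≠ 0) : 0 < polarF N x :=
  pos_of_mul_pos_left ((real_inner_self_pos.mpr hx).trans_le (N.inner_le_polarF_mul_F x x))
    (N.F_nonneg x)

theorem polarF_nonneg (x : En n) : 0 ≤ polarF N x := by
  rcases eq_or_ne x 0 with rfl | hx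
  · exact N.polarF_zero.ge
  · exact (N.polarF_pos hx).le

theorem isCompact_setOf_F_le_one : IsCompact {ξ | N.F ξ ≤ 1} := by
  obtain ⟨C, hC, hnorm⟩ := N.exists_norm_le_mul_F
  refine (isCompact_closedBall (0 : En n) C).of_isClosed_subset
    (isClosed_le N.continuous_F continuous_const) fun ξ hξ => ?_
  rw [mem_closedBall_zero_iff]
  exact (hnorm ξ).trans (mul_le_of_le_one_right hC hξ)

theorem exists_inner_eq_polarF (x : En n) : ∃ ξ, N.F ξ ≤ 1 ∧ ⟪ξ, x⟫ = polarF N x := by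
  obtain ⟨ξ, hξ, hmax⟩ := N.isCompact_setOf_F_le_one.exists_isMaxOn
    ⟨0, N.F_zero.trans_le zero_le_one⟩ (f := fun ξ => ⟪ξ, x⟫) (by fun_prop)
  refine ⟨ξ, hξ, le_antisymm ((N.inner_le_polarF_mul_F ξ x).trans
    (mul_le_of_le_one_right (N.polarF_nonneg x) hξ)) (Real.sSup_le ?_ ?_)⟩
  · rintro _ ⟨η, hη, rfl⟩
    have hunit : N.F ((N.F η)⁻¹ • η) ≤ 1 := by
      rw [N.homog _ (inv_nonneg.mpr (N.F_nonneg η)), inv_mul_cancel₀ (N.pos η hη).ne']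
    simpa [real_inner_smul_left, ← div_eq_inv_mul] using hmax hunit
  · simpa using hmax (N.F_zero.trans_le zero_le_one)

/-- A point of `{F ≤ 1}` at which the supremum defining `F^o(x)` is attained. It is unique for
`x ≠ 0`, and is then the gradient of `F^o` at `x`. -/
def polarArgmax (x : En n) : En n :=
  (N.exists_inner_eq_polarF x).choose

theorem F_polarArgmax_le_one (x : En n) : N.F (N.polarArgmax x) ≤ 1 :=
  (N.exists_inner_eq_polarF x).choose_spec.1

theorem inner_polarArgmax_self (x : En n) : ⟪N.polarArgmax x, x⟫ = polarF N x :=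
  (N.exists_inner_eq_polarF x).choose_spec.2

theorem F_eq_one_of_inner_eq_polarF {ξ x : En n} (hx : x ≠ 0) (hξ : N.F ξ ≤ 1)
    (hξx : ⟪ξ, x⟫ = polarF N x) : N.F ξ = 1 := by
  refine hξ.antisymm ((le_mul_iff_one_le_right (N.polarF_pos hx)).mp ?_)
  exact hξx.symm.trans_le (N.inner_le_polarF_mul_F ξ x)

theorem F_polarArgmax {x : En n} (hx : x ≠ 0) : N.F (N.polarArgmax x) = 1 :=
  N.F_eq_one_of_inner_eq_polarF hx (N.F_polarArgmax_le_one x) (N.inner_polarArgmax_self x)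

theorem eq_polarArgmax {ξ x : En n} (hx : x ≠ 0) (hξ : N.F ξ ≤ 1) (hξx : ⟪ξ, x⟫ = polarF N x) :
    ξ = N.polarArgmax x := by
  have hF := N.F_eq_one_of_inner_eq_polarF hx hξ hξx
  have hF' := N.F_polarArgmax hx
  refine N.eq_of_inner_eq_mul_F (N.polarF_pos hx) (fun ζ => N.inner_le_polarF_mul_F ζ x)
    (hF.trans hF'.symm) ?_ ?_
  · rw [hξx, hF, mul_one]
  · rw [N.inner_polarArgmax_self, hF', mul_one]

theorem inner_polarArgmax_le (x y : En n) : ⟪N.polarArgmax x, y⟫ ≤ polarF N y :=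
  (N.inner_le_polarF_mul_F _ y).trans
    (mul_le_of_le_one_right (N.polarF_nonneg y) (N.F_polarArgmax_le_one x))

theorem inner_polarArgmax_sub_le (x y : En n) :
    ⟪N.polarArgmax x, y - x⟫ ≤ polarF N y - polarF N x := by
  rw [inner_sub_right, N.inner_polarArgmax_self]
  exact sub_le_sub_right (N.inner_polarArgmax_le x y) _

theorem exists_norm_polarArgmax_le : ∃ C ≥ 0, ∀ x, ‖N.polarArgmax x‖ ≤ C := by
  obtain ⟨C, hC, hnorm⟩ := N.exists_norm_le_mul_F
  exact ⟨C, hC, fun x => (hnorm _).trans (mul_le_of_le_one_right hC (N.F_polarArgmax_le_one x))⟩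

theorem continuous_polarF : Continuous (polarF N) := by
  obtain ⟨C, hC, hnorm⟩ := N.exists_norm_polarArgmax_le
  refine (LipschitzWith.of_le_add_mul ⟨C, hC⟩ fun x y => ?_).continuous
  have hinner : ⟪N.polarArgmax x, x - y⟫ ≤ C * dist x y := by
    rw [dist_eq_norm]
    exact (real_inner_le_norm _ _).trans (by gcongr; exact hnorm x)
  rw [inner_sub_right, N.inner_polarArgmax_self] at hinner
  change polarF N x ≤ polarF N y + C * dist x y
  linarith [N.inner_polarArgmax_le x y]

theorem tendsto_inner_polarArgmax (x : En n) :
    Tendsto (fun y => ⟪N.polarArgmax y, x⟫) (𝓝 x) (𝓝 (polarF N x)) := by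
  obtain ⟨C, -, hnorm⟩ := N.exists_norm_polarArgmax_le
  have hlower : Tendsto (fun y => polarF N y - C * ‖y - x‖) (𝓝 x) (𝓝 (polarF N x)) := by
    have hcont : Continuous fun y => polarF N y - C * ‖y - x‖ := by
      have := N.continuous_polarF
      fun_prop
    simpa using hcont.tendsto x
  refine tendsto_of_tendsto_of_tendsto_of_le_of_le hlower tendsto_const_nhds (fun y => ?_)
    fun y => N.inner_polarArgmax_le y x
  have hinner : ⟪N.polarArgmax y, y - x⟫ ≤ C * ‖y - x‖ :=
    (real_inner_le_norm _ _).trans (by gcongr; exact hnorm y)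
  rw [inner_sub_right, N.inner_polarArgmax_self] at hinner
  linarith

theorem continuousAt_polarArgmax {x : En n} (hx : x ≠ 0) : ContinuousAt N.polarArgmax x := by
  refine N.isCompact_setOf_F_le_one.tendsto_nhds_of_unique_mapClusterPt
    (Eventually.of_forall N.F_polarArgmax_le_one) fun ξ hξ hcluster => ?_
  refine N.eq_polarArgmax hx hξ ?_
  have hinner : MapClusterPt ⟪ξ, x⟫ (𝓝 x) fun y => ⟪N.polarArgmax y, x⟫ :=
    hcluster.continuousAt_comp (f := fun ζ => ⟪ζ, x⟫) (by fun_prop)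
  exact eq_of_nhds_neBot (hinner.neBot.mono (inf_le_inf_left _ (N.tendsto_inner_polarArgmax x)))

theorem hasGradientAt_polarF {x : En n} (hx : x ≠ 0) :
    HasGradientAt (polarF N) (N.polarArgmax x) x :=
  hasGradientAt_of_continuousAt_subgradient (N.continuousAt_polarArgmax hx)
    N.inner_polarArgmax_sub_le

theorem contDiffOn_polarF : ContDiffOn ℝ 1 (polarF N) {(0 : En n)}ᶜ := by
  have hfderiv : ∀ x ∈ ({0}ᶜ : Set (En n)),
      fderiv ℝ (polarF N) x = InnerProductSpace.toDual ℝ _ (N.polarArgmax x) := fun x hx =>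
    (N.hasGradientAt_polarF hx).hasFDerivAt.fderiv
  rw [← zero_add 1, contDiffOn_succ_iff_fderiv_of_isOpen isOpen_compl_singleton]
  refine ⟨fun x hx => (N.hasGradientAt_polarF hx).differentiableAt.differentiableWithinAt,
    by simp, contDiffOn_zero.mpr (ContinuousOn.congr (fun x hx => ?_) hfderiv)⟩
  exact ((InnerProductSpace.toDual ℝ (En n)).continuous.continuousAt.comp
    (N.continuousAt_polarArgmax hx)).continuousWithinAt

theorem polarF_smul_gradient_F_polarArgmax (x : En n) :
    polarF N x • gradient N.F (N.polarArgmax x) = x := by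
  rcases eq_or_ne x 0 with rfl | hx
  · rw [N.polarF_zero, zero_smul]
  have hF := N.F_polarArgmax hx
  have hne : N.polarArgmax x ≠ 0 := fun h => by simp [h, N.F_zero] at hF
  have hgrad : HasGradientAt (fun ζ => polarF N x * N.F ζ - ⟪x, ζ⟫)
      (polarF N x • gradient N.F (N.polarArgmax x) - x) (N.polarArgmax x) := by
    rw [hasGradientAt_iff_hasFDerivAt, map_sub, map_smul]
    exact ((N.hasGradientAt_F hne).hasFDerivAt.const_mul _).sub
      (InnerProductSpace.toDual ℝ (En n) x).hasFDerivAt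
  have hmin : IsLocalMin (fun ζ => polarF N x * N.F ζ - ⟪x, ζ⟫) (N.polarArgmax x) :=
    Eventually.of_forall fun ζ => by
      change polarF N x * N.F (N.polarArgmax x) - ⟪x, N.polarArgmax x⟫ ≤
        polarF N x * N.F ζ - ⟪x, ζ⟫
      rw [hF, mul_one, real_inner_comm, N.inner_polarArgmax_self, sub_self, real_inner_comm]
      exact sub_nonneg.mpr (N.inner_le_polarF_mul_F ζ x)
  have hzero := hmin.hasFDerivAt_eq_zero hgrad.hasFDerivAt
  exact sub_eq_zero.mp ((map_eq_zero_iff _ (InnerProductSpace.toDual ℝ (En n)).injective).mp hzero)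

theorem tendsto_polarF_cocompact : Tendsto (polarF N) (cocompact (En n)) atTop := by
  obtain ⟨C, hC, hF⟩ := N.exists_F_le_mul_norm
  refine tendsto_atTop_mono (fun x => ?_) ((tendsto_norm_cocompact_atTop).atTop_div_const hC)
  rcases eq_or_ne x 0 with rfl | hx
  · rw [norm_zero, zero_div, N.polarF_zero]
  have hself := (N.inner_le_polarF_mul_F x x).trans
    (mul_le_mul_of_nonneg_left (hF x) (N.polarF_nonneg x))
  rw [real_inner_self_eq_norm_mul_norm, ← mul_assoc] at hself
  exact (div_le_iff₀ hC).mpr (le_of_mul_le_mul_right hself (norm_pos_iff.mpr hx))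

/-! ### The flux of the Finsler `p`-Laplacian -/

/-- The vector field `ξ ↦ F(ξ)^{p-1} F_ξ(ξ)`, whose divergence along `∇v` is the Finsler
`p`-Laplacian of `v`. -/
def flux (p : ℝ) (ξ : En n) : En n :=
  N.F ξ ^ (p - 1) • gradient N.F ξ

theorem flux_neg (p : ℝ) (ξ : En n) : N.flux p (-ξ) = -N.flux p ξ := by
  rw [flux, flux, N.even, N.gradient_F_neg, smul_neg]

theorem flux_smul (p : ℝ) {c : ℝ} (hc : 0 < c) (ξ : En n) :
    N.flux p (c • ξ) = c ^ (p - 1) • N.flux p ξ := by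
  rw [flux, flux, N.homog c hc.le, Real.mul_rpow hc.le (N.F_nonneg ξ), N.gradient_F_smul hc,
    mul_smul]

theorem inner_flux_self {p : ℝ} (hp : p ≠ 0) (ξ : En n) : ⟪N.flux p ξ, ξ⟫ = N.F ξ ^ p := by
  rw [flux, real_inner_smul_left, N.inner_gradient_F_self,
    ← Real.rpow_add_one' (N.F_nonneg ξ) (by simpa using hp), sub_add_cancel]

theorem inner_flux_le (p : ℝ) (ξ η : En n) : ⟪N.flux p ξ, η⟫ ≤ N.F ξ ^ (p - 1) * N.F η := by
  rw [flux, real_inner_smul_left]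
  exact mul_le_mul_of_nonneg_left (N.inner_gradient_F_le ξ η)
    (Real.rpow_nonneg (N.F_nonneg ξ) _)

theorem inner_flux_lt (p : ℝ) {ξ η : En n} (hF : N.F ξ = N.F η) (hne : ξ ≠ η) :
    ⟪N.flux p ξ, η⟫ < N.F ξ ^ (p - 1) * N.F η := by
  have hξ : 0 < N.F ξ := by
    rcases eq_or_ne ξ 0 with rfl | hξ
    · exact hF ▸ N.pos η hne.symm
    · exact N.pos ξ hξ
  rw [flux, real_inner_smul_left]
  exact mul_lt_mul_of_pos_left (N.inner_gradient_F_lt hF hne) (Real.rpow_pos_of_pos hξ _)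

theorem continuous_flux {p : ℝ} (hp : 1 < p) : Continuous (N.flux p) := by
  have hpow : Continuous fun ξ => N.F ξ ^ (p - 1) :=
    N.continuous_F.rpow_const fun _ => Or.inr (sub_nonneg.mpr hp.le)
  have hpow0 : N.F 0 ^ (p - 1) = 0 := by
    rw [N.F_zero, Real.zero_rpow (sub_ne_zero.mpr hp.ne')]
  refine continuous_iff_continuousAt.mpr fun ξ => ?_
  rcases eq_or_ne ξ 0 with rfl | hξ
  · obtain ⟨C, -, hC⟩ := N.exists_norm_gradient_F_le
    have hzero : N.flux p 0 = 0 := by rw [flux, hpow0, zero_smul]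
    rw [ContinuousAt, hzero]
    exact NormedField.tendsto_zero_smul_of_tendsto_zero_of_bounded
      (ε := fun ξ => N.F ξ ^ (p - 1)) (by simpa only [hpow0] using hpow.tendsto 0)
      (isBoundedUnder_of ⟨C, hC⟩)
  · exact hpow.continuousAt.smul (N.continuousAt_gradient_F hξ)

theorem inner_flux_sub_flux_pos {p : ℝ} (hp : 1 < p) {ξ η : En n} (hne : ξ ≠ η) :
    0 < ⟪N.flux p ξ - N.flux p η, ξ - η⟫ := by
  have hpow : ∀ ζ, N.F ζ ^ p = N.F ζ ^ (p - 1) * N.F ζ := fun ζ => by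
    rw [← Real.rpow_add_one' (N.F_nonneg ζ) (by linarith), sub_add_cancel]
  have hexpand : ⟪N.flux p ξ - N.flux p η, ξ - η⟫ =
      (N.F ξ ^ (p - 1) - N.F η ^ (p - 1)) * (N.F ξ - N.F η) +
        (N.F ξ ^ (p - 1) * N.F η - ⟪N.flux p ξ, η⟫) +
        (N.F η ^ (p - 1) * N.F ξ - ⟪N.flux p η, ξ⟫) := by
    have hp0 : p ≠ 0 := by positivity
    rw [inner_sub_left, inner_sub_right, inner_sub_right, N.inner_flux_self hp0,
      N.inner_flux_self hp0, hpow ξ, hpow η]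
    ring
  have hξη := N.inner_flux_le p ξ η
  have hηξ := N.inner_flux_le p η ξ
  have hmono := Real.strictMonoOn_rpow_Ici_of_exponent_pos (sub_pos.mpr hp)
  rw [hexpand]
  rcases lt_trichotomy (N.F ξ) (N.F η) with hlt | heq | hgt
  · have := mul_pos_of_neg_of_neg (sub_neg.mpr (hmono (N.F_nonneg ξ) (N.F_nonneg η) hlt))
      (sub_neg.mpr hlt)
    linarith
  · have := N.inner_flux_lt p heq hne
    rw [heq, sub_self, zero_mul]
    rw [heq] at this hηξ
    linarith
  · have := mul_pos (sub_pos.mpr (hmono (N.F_nonneg η) (N.F_nonneg ξ) hgt)) (sub_pos.mpr hgt)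
    linarith

end MinkowskiNorm

/-! ### Weak solutions -/

section WeakSolutions

variable {n : ℕ} {N : MinkowskiNorm n} {Ω : Set (En n)} {p : ℝ} {φ : En n → ℝ}

open scoped ContDiff

theorem isTestFun_iff_isTestFunOfClass : IsTestFun Ω φ ↔ IsTestFunOfClass ∞ Ω φ :=
  ⟨fun h => ⟨h.1, h.2.1, h.2.2⟩,
    fun h => ⟨h.contDiff, h.hasCompactSupport, h.tsupport_subset⟩⟩

theorem MinkowskiNorm.continuousOn_flux_gradient (hΩ : IsOpen Ω) (hp : 1 < p) {v : En n → ℝ}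
    (hv : ContDiffOn ℝ 1 v Ω) : ContinuousOn (fun x => N.flux p (gradient v x)) Ω :=
  (N.continuous_flux hp).comp_continuousOn (continuousOn_gradient_of_isOpen hΩ hv)

theorem isWeakPHarmonic_iff {v : En n → ℝ} : IsWeakPHarmonic N Ω p v ↔
    ∀ φ, IsTestFunOfClass ∞ Ω φ → ∫ x in Ω, fderiv ℝ φ x (N.flux p (gradient v x)) = 0 := by
  simp only [IsWeakPHarmonic, isTestFun_iff_isTestFunOfClass, MinkowskiNorm.flux, map_smul,
    smul_eq_mul, inner_gradient_right, conj_trivial]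

theorem IsWeakPHarmonic.setIntegral_fderiv_flux_eq_zero {v : En n → ℝ}
    (hv : IsWeakPHarmonic N Ω p v) (hΩ : IsOpen Ω) (hp : 1 < p) (hv1 : ContDiffOn ℝ 1 v Ω)
    (hφ : IsTestFunOfClass 1 Ω φ) : ∫ x in Ω, fderiv ℝ φ x (N.flux p (gradient v x)) = 0 := by
  simpa using IsTestFunOfClass.setIntegral_eq_zero_of_smooth (h := 0) hΩ
    (N.continuousOn_flux_gradient hΩ hp hv1) continuousOn_const
    (by simpa using isWeakPHarmonic_iff.mp hv) hφ

theorem isWeakPHarmonic_const (hp : 1 < p) (c : ℝ) : IsWeakPHarmonic N Ω p fun _ => c :=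
  fun _ _ => by
    simp [gradient_fun_const, N.F_zero, Real.zero_rpow (sub_ne_zero.mpr hp.ne')]

theorem IsWeakPHarmonic.le_of_le_frontier [NeZero n] {v₁ v₂ : En n → ℝ}
    (hv₁ : IsWeakPHarmonic N Ω p v₁) (hv₂ : IsWeakPHarmonic N Ω p v₂) (hΩ : IsOpen Ω) (hp : 1 < p)
    (h₁ : ContDiffOn ℝ 1 v₁ Ω) (h₂ : ContDiffOn ℝ 1 v₂ Ω)
    (hc₁ : ContinuousOn v₁ (closure Ω)) (hc₂ : ContinuousOn v₂ (closure Ω))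
    (hfrontier : ∀ y ∈ frontier Ω, v₁ y ≤ v₂ y)
    (hinfty : ∀ ε > 0, ∀ᶠ y in cocompact (En n) ⊓ 𝓟 Ω, v₁ y ≤ v₂ y + ε) :
    ∀ y ∈ Ω, v₁ y ≤ v₂ y := by
  have : NoncompactSpace (En n) := NormedSpace.noncompactSpace ℝ _
  refine le_of_setIntegral_inner_nonpos (μ := volume) hΩ (N.continuous_flux hp)
    (fun _ _ => N.inner_flux_sub_flux_pos hp) h₁ h₂ hc₁ hc₂ (fun φ hφ _ => ?_) hfrontier hinfty
  have hint : ∀ {v : En n → ℝ}, ContDiffOn ℝ 1 v Ω →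
      IntegrableOn (fun x => fderiv ℝ φ x (N.flux p (gradient v x))) Ω := fun hv => by
    simpa using (hφ.integrable_fderiv_apply_add_mul (μ := volume) (h := 0)
      (N.continuousOn_flux_gradient hΩ hp hv) continuousOn_const).integrableOn
  simp only [inner_gradient_right, conj_trivial, map_sub]
  rw [integral_sub (hint h₁) (hint h₂), hv₁.setIntegral_fderiv_flux_eq_zero hΩ hp h₁ hφ,
    hv₂.setIntegral_fderiv_flux_eq_zero hΩ hp h₂ hφ, sub_zero]

variable {u : En n → ℝ}

theorem IsWeakPSol.setIntegral_fderiv_flux_add_eq_zero (hsol : IsWeakPSol N Ω p u)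
    (hΩ : IsOpen Ω) (hp : 1 < p) (hu : ContDiffOn ℝ 1 u Ω) (hφ : IsTestFunOfClass 1 Ω φ) :
    ∫ x in Ω, (fderiv ℝ φ x (N.flux p (gradient u x)) + N.F (gradient u x) ^ p * φ x) = 0 := by
  have hflux := N.continuousOn_flux_gradient hΩ hp hu
  have hpow : ContinuousOn (fun x => N.F (gradient u x) ^ p) Ω :=
    (N.continuous_F.comp_continuousOn (continuousOn_gradient_of_isOpen hΩ hu)).rpow_const
      fun _ _ => Or.inr (zero_le_one.trans hp.le)
  refine IsTestFunOfClass.setIntegral_eq_zero_of_smooth hΩ hflux hpow (fun ψ hψ => ?_) hφ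
  have hψ1 : IsTestFunOfClass 1 Ω ψ := hψ.of_le (by simp)
  have hint₁ : IntegrableOn (fun x => fderiv ℝ ψ x (N.flux p (gradient u x))) Ω := by
    simpa using (hψ1.integrable_fderiv_apply_add_mul (μ := volume) (h := 0) hflux
      continuousOn_const).integrableOn
  have hint₂ : IntegrableOn (fun x => N.F (gradient u x) ^ p * ψ x) Ω := by
    simpa using (hψ1.integrable_fderiv_apply_add_mul (μ := volume) (B := 0)
      continuousOn_const hpow).integrableOn
  rw [integral_add hint₁ hint₂, ← eq_neg_iff_add_eq_zero]
  simpa only [MinkowskiNorm.flux, map_smul, smul_eq_mul, inner_gradient_right, conj_trivial]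
    using hsol ψ (isTestFun_iff_isTestFunOfClass.mpr hψ)

/-- Testing the equation with `exp (-u) * φ` makes the right-hand side cancel. -/
theorem IsWeakPSol.setIntegral_exp_neg_mul_fderiv_flux_eq_zero (hsol : IsWeakPSol N Ω p u)
    (hΩ : IsOpen Ω) (hp : 1 < p) (hu : ContDiffOn ℝ 1 u Ω) (hφ : IsTestFunOfClass 1 Ω φ) :
    ∫ x in Ω, Real.exp (-u x) * fderiv ℝ φ x (N.flux p (gradient u x)) = 0 := by
  rw [← hsol.setIntegral_fderiv_flux_add_eq_zero hΩ hp hu (hφ.mul_left hΩ hu.neg.exp)]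
  refine setIntegral_congr_fun hΩ.measurableSet fun x hx => ?_
  have hux := (hasGradientAt_of_contDiffOn hΩ hu hx).hasFDerivAt
  have hφx := (hφ.contDiff.differentiable one_ne_zero x).hasFDerivAt
  have hself : ⟪gradient u x, N.flux p (gradient u x)⟫ = N.F (gradient u x) ^ p := by
    rw [real_inner_comm, N.inner_flux_self (by positivity)]
  have hprod : HasFDerivAt (fun y => Real.exp (-u y) * φ y) _ x := hux.neg.exp.mul hφx
  simp only [hprod.fderiv, Pi.neg_apply, add_apply, smul_apply, neg_apply, smul_eq_mul,
    InnerProductSpace.toDual_apply_apply, hself]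
  ring

theorem MinkowskiNorm.flux_gradient_exp_neg_div (hp : 1 < p) {x G : En n}
    (hu : HasGradientAt u G x) : N.flux p (gradient (fun y => Real.exp (-u y / (p - 1))) x) =
      -(((p - 1)⁻¹ ^ (p - 1) * Real.exp (-u x)) • N.flux p G) := by
  have hp0 : 0 < p - 1 := sub_pos.mpr hp
  have hderiv : HasDerivAt (fun t => Real.exp (-t / (p - 1)))
      (-((p - 1)⁻¹ * Real.exp (-u x / (p - 1)))) (u x) := by
    convert ((hasDerivAt_neg (u x)).div_const (p - 1)).exp using 1
    ring
  have hpow : ((p - 1)⁻¹ * Real.exp (-u x / (p - 1))) ^ (p - 1) =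
      (p - 1)⁻¹ ^ (p - 1) * Real.exp (-u x) := by
    rw [Real.mul_rpow (by positivity) (by positivity), ← Real.exp_mul, div_mul_cancel₀ _ hp0.ne']
  rw [(hasGradientAt_comp hderiv hu).gradient, neg_smul, N.flux_neg, N.flux_smul p (by positivity),
    hpow]

theorem IsWeakPSol.isWeakPHarmonic_exp_neg_div (hsol : IsWeakPSol N Ω p u) (hΩ : IsOpen Ω)
    (hp : 1 < p) (hu : ContDiffOn ℝ 1 u Ω) :
    IsWeakPHarmonic N Ω p fun y => Real.exp (-u y / (p - 1)) := by
  refine isWeakPHarmonic_iff.mpr fun φ hφ => ?_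
  have hφ1 : IsTestFunOfClass 1 Ω φ := hφ.of_le (by simp)
  calc ∫ x in Ω, fderiv ℝ φ x (N.flux p (gradient (fun y => Real.exp (-u y / (p - 1))) x))
      = ∫ x in Ω, -(p - 1)⁻¹ ^ (p - 1) *
          (Real.exp (-u x) * fderiv ℝ φ x (N.flux p (gradient u x))) := by
        refine setIntegral_congr_fun hΩ.measurableSet fun x hx => ?_
        simp only [N.flux_gradient_exp_neg_div hp (hasGradientAt_of_contDiffOn hΩ hu hx), map_neg,
          map_smul, smul_eq_mul]
        ring
    _ = 0 := by
        rw [integral_const_mul, hsol.setIntegral_exp_neg_mul_fderiv_flux_eq_zero hΩ hp hu hφ1,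
          mul_zero]

end WeakSolutions

/-! ### The radial `p`-harmonic function -/

namespace MinkowskiNorm

variable {n : ℕ} (N : MinkowskiNorm n) {p r : ℝ} {x₀ y : En n}

/-- The function `(F^o(y - x₀) / r)^{-(n-p)/(p-1)}`, equal to `1` on the boundary of the Wulff shape
of radius `r` centered at `x₀` and `p`-harmonic away from `x₀`. -/
def wulffPotential (p r : ℝ) (x₀ y : En n) : ℝ :=
  (polarF N (y - x₀) / r) ^ (-((n - p) / (p - 1)))

theorem hasGradientAt_polarF_sub (hy : y ≠ x₀) :
    HasGradientAt (fun z => polarF N (z - x₀)) (N.polarArgmax (y - x₀)) y := by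
  have hsub := (hasFDerivAt_id (𝕜 := ℝ) y).sub_const x₀
  exact (N.hasGradientAt_polarF (sub_ne_zero.mpr hy)).hasFDerivAt.comp y hsub

theorem contDiffOn_polarF_sub (x₀ : En n) :
    ContDiffOn ℝ 1 (fun y => polarF N (y - x₀)) {x₀}ᶜ :=
  N.contDiffOn_polarF.comp (contDiff_id.sub contDiff_const).contDiffOn
    fun _ hy => sub_ne_zero.mpr hy

theorem continuous_polarF_sub (x₀ : En n) : Continuous fun y => polarF N (y - x₀) :=
  N.continuous_polarF.comp (continuous_sub_right x₀)

theorem polarF_sub_pos (hy : y ≠ x₀) : 0 < polarF N (y - x₀) :=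
  N.polarF_pos (sub_ne_zero.mpr hy)

theorem contDiffOn_wulffPotential (hr : 0 < r) (p : ℝ) (x₀ : En n) :
    ContDiffOn ℝ 1 (N.wulffPotential p r x₀) {x₀}ᶜ :=
  ((N.contDiffOn_polarF_sub x₀).div_const r).rpow_const_of_ne fun _ hy =>
    (div_pos (N.polarF_sub_pos hy) hr).ne'

theorem flux_polarArgmax (p : ℝ) {x : En n} (hx : x ≠ 0) :
    N.flux p (N.polarArgmax x) = (polarF N x)⁻¹ • x := by
  rw [flux, N.F_polarArgmax hx, Real.one_rpow, one_smul, eq_inv_smul_iff₀ (N.polarF_pos hx).ne',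
    N.polarF_smul_gradient_F_polarArgmax]

theorem gradient_wulffPotential (hr : 0 < r) (p : ℝ) (hy : y ≠ x₀) :
    gradient (N.wulffPotential p r x₀) y =
      -(((n - p) / (p - 1) / r * (polarF N (y - x₀) / r) ^ (-((n - p) / (p - 1)) - 1)) •
        N.polarArgmax (y - x₀)) := by
  set a := ((n : ℝ) - p) / (p - 1)
  have hderiv : HasDerivAt (fun t => (t / r) ^ (-a))
      (-(a / r * (polarF N (y - x₀) / r) ^ (-a - 1))) (polarF N (y - x₀)) := by
    convert ((hasDerivAt_id' (polarF N (y - x₀))).div_const r).rpow_const (p := -a)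
      (Or.inl (div_pos (N.polarF_sub_pos hy) hr).ne') using 1
    ring
  rw [← neg_smul]
  exact (hasGradientAt_comp (f := fun z => polarF N (z - x₀)) hderiv
    (N.hasGradientAt_polarF_sub hy)).gradient

/-- With this exponent the flux of `wulffPotential` is homogeneous of degree `1 - n`. -/
theorem flux_gradient_wulffPotential (hr : 0 < r) (hp : 1 < p) (hpn : p < n) (hy : y ≠ x₀) :
    N.flux p (gradient (N.wulffPotential p r x₀) y) =
      -((((n - p) / (p - 1) / r) ^ (p - 1) * r ^ ((n : ℝ) - 1)) •
        polarF N (y - x₀) ^ (-(n : ℝ)) • (y - x₀)) := by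
  have hp0 : 0 < p - 1 := sub_pos.mpr hp
  have : 0 < n - p := sub_pos.mpr hpn
  have hP := N.polarF_sub_pos hy
  have hexponent : (-((n - p) / (p - 1)) - 1) * (p - 1) = -((n : ℝ) - 1) := by
    field_simp
    ring
  have hpow : polarF N (y - x₀) ^ (-((n : ℝ) - 1)) * (polarF N (y - x₀))⁻¹ =
      polarF N (y - x₀) ^ (-(n : ℝ)) := by
    rw [← Real.rpow_neg_one (polarF N _), ← Real.rpow_add hP]
    congr 1
    ring
  rw [N.gradient_wulffPotential hr p hy, N.flux_neg, N.flux_smul p (by positivity),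
    N.flux_polarArgmax p (sub_ne_zero.mpr hy), smul_smul, smul_smul,
    Real.mul_rpow (by positivity) (by positivity), ← Real.rpow_mul (by positivity), hexponent,
    Real.div_rpow hP.le hr.le, Real.rpow_neg hr.le, div_inv_eq_mul, ← hpow]
  congr 2
  ring

theorem fderiv_polarF_sub_rpow_apply_sub (hy : y ≠ x₀) (s : ℝ) :
    fderiv ℝ (fun z => polarF N (z - x₀) ^ s) y (y - x₀) = s * polarF N (y - x₀) ^ s := by
  have hP := N.polarF_sub_pos hy
  have hderiv := Real.hasDerivAt_rpow_const (p := s) (Or.inl hP.ne')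
  rw [(hasGradientAt_comp (f := fun z => polarF N (z - x₀)) hderiv
      (N.hasGradientAt_polarF_sub hy)).fderiv_apply, real_inner_smul_left,
    N.inner_polarArgmax_self, mul_assoc, ← Real.rpow_add_one hP.ne', sub_add_cancel]

theorem isWeakPHarmonic_wulffPotential {Ω : Set (En n)} (hΩ : IsOpen Ω) (hx₀ : x₀ ∉ Ω)
    (hr : 0 < r) (hp : 1 < p) (hpn : p < n) :
    IsWeakPHarmonic N Ω p (N.wulffPotential p r x₀) := by
  refine isWeakPHarmonic_iff.mpr fun φ hφ => ?_
  have hne : ∀ y ∈ Ω, y ≠ x₀ := fun y hy => ne_of_mem_of_not_mem hy hx₀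
  set c := ((n - p) / (p - 1) / r) ^ (p - 1) * r ^ ((n : ℝ) - 1)
  calc ∫ y in Ω, fderiv ℝ φ y (N.flux p (gradient (N.wulffPotential p r x₀) y))
      = ∫ y in Ω, -c * (polarF N (y - x₀) ^ (-(n : ℝ)) * fderiv ℝ φ y (y - x₀)) := by
        refine setIntegral_congr_fun hΩ.measurableSet fun y hy => ?_
        simp only [N.flux_gradient_wulffPotential hr hp hpn (hne y hy), map_neg, map_smul,
          smul_eq_mul, neg_mul, c]
    _ = 0 := by
        rw [integral_const_mul, setIntegral_mul_fderiv_apply_sub_eq_zero hΩ ?_ (fun y hy => ?_)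
          (hφ.of_le (by simp)), mul_zero]
        · exact ((N.contDiffOn_polarF_sub x₀).mono hne).rpow_const_of_ne fun y hy =>
            (N.polarF_sub_pos (hne y hy)).ne'
        · rw [N.fderiv_polarF_sub_rpow_apply_sub (hne y hy), finrank_euclideanSpace_fin, neg_mul]

theorem tendsto_polarF_sub_cocompact (x₀ : En n) :
    Tendsto (fun y => polarF N (y - x₀)) (cocompact (En n)) atTop :=
  N.tendsto_polarF_cocompact.comp (Homeomorph.subRight x₀).isClosedEmbedding.tendsto_cocompact

theorem tendsto_wulffPotential_cocompact (hr : 0 < r) (hp : 1 < p) (hpn : p < n) (x₀ : En n) :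
    Tendsto (N.wulffPotential p r x₀) (cocompact (En n)) (𝓝 0) :=
  (tendsto_rpow_neg_atTop (div_pos (sub_pos.mpr hpn) (sub_pos.mpr hp))).comp
    ((N.tendsto_polarF_sub_cocompact x₀).atTop_div_const hr)

theorem wulffPotential_le_one (hr : 0 < r) (hp : 1 < p) (hpn : p < n)
    (hy : r ≤ polarF N (y - x₀)) : N.wulffPotential p r x₀ y ≤ 1 :=
  Real.rpow_le_one_of_one_le_of_nonpos ((one_le_div hr).mpr hy)
    (neg_nonpos.mpr (div_pos (sub_pos.mpr hpn) (sub_pos.mpr hp)).le)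

end MinkowskiNorm

/-! ### The boundary gradient estimate -/

section Bounds

variable {n : ℕ} {N : MinkowskiNorm n} {Ω : Set (En n)} {p : ℝ} {u : En n → ℝ}

theorem IsWeakPSol.nonneg [NeZero n] (hsol : IsWeakPSol N Ω p u) (hΩ : IsOpen Ω) (hp : 1 < p)
    (hu : ContDiffOn ℝ 1 u Ω) (hc : ContinuousOn u (closure Ω))
    (hfrontier : ∀ y ∈ frontier Ω, 0 ≤ u y)
    (hinfty : ∀ᶠ y in cocompact (En n) ⊓ 𝓟 Ω, 0 ≤ u y) : ∀ y ∈ Ω, 0 ≤ u y := by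
  have hiff : ∀ y, Real.exp (-u y / (p - 1)) ≤ 1 ↔ 0 ≤ u y := fun y => by
    rw [Real.exp_le_one_iff, div_le_iff₀ (sub_pos.mpr hp), zero_mul, neg_nonpos]
  have hle : ∀ y ∈ Ω, Real.exp (-u y / (p - 1)) ≤ 1 :=
    (hsol.isWeakPHarmonic_exp_neg_div hΩ hp hu).le_of_le_frontier (isWeakPHarmonic_const hp 1) hΩ hp
      (hu.neg.div_const _).exp contDiffOn_const (hc.neg.div_const _).rexp continuousOn_const
      (fun y hy => (hiff y).mpr (hfrontier y hy))
      fun ε hε => hinfty.mono fun y hy => ((hiff y).mpr hy).trans (le_add_of_nonneg_right hε.le)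
  exact fun y hy => (hiff y).mp (hle y hy)

variable {r : ℝ} {x₀ : En n}

theorem IsWeakPSol.wulffPotential_le_exp_neg_div [NeZero n] (hsol : IsWeakPSol N Ω p u)
    (hΩ : IsOpen Ω) (hp : 1 < p) (hpn : p < n) (hu : ContDiffOn ℝ 1 u Ω)
    (hc : ContinuousOn u (closure Ω)) (hfrontier : ∀ y ∈ frontier Ω, u y ≤ 0) (hr : 0 < r)
    (hW : ∀ y ∈ closure Ω, r ≤ polarF N (y - x₀)) :
    ∀ y ∈ Ω, N.wulffPotential p r x₀ y ≤ Real.exp (-u y / (p - 1)) := by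
  have hp0 : 0 < p - 1 := sub_pos.mpr hp
  have hx₀ : x₀ ∉ closure Ω := fun h => by
    simpa [N.polarF_zero, hr.not_ge] using hW x₀ h
  have hne : closure Ω ⊆ {x₀}ᶜ := subset_compl_singleton_iff.mpr hx₀
  have hpot := N.contDiffOn_wulffPotential hr p x₀
  refine (N.isWeakPHarmonic_wulffPotential hΩ (notMem_subset subset_closure hx₀) hr hp
    hpn).le_of_le_frontier (hsol.isWeakPHarmonic_exp_neg_div hΩ hp hu) hΩ hp
    (hpot.mono (subset_closure.trans hne)) (hu.neg.div_const _).exp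
    (hpot.continuousOn.mono hne) (hc.neg.div_const _).rexp (fun y hy => ?_) fun ε hε => ?_
  · calc N.wulffPotential p r x₀ y ≤ 1 :=
          N.wulffPotential_le_one hr hp hpn (hW y (frontier_subset_closure hy))
      _ ≤ Real.exp (-u y / (p - 1)) :=
          Real.one_le_exp (div_nonneg (neg_nonneg.mpr (hfrontier y hy)) hp0.le)
  · have hsmall := (N.tendsto_wulffPotential_cocompact hr hp hpn x₀).eventually_le_const hε
    exact (hsmall.filter_mono inf_le_left).mono fun y hy =>
      hy.trans (le_add_of_nonneg_left (Real.exp_pos _).le)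

theorem IsWeakPSol.le_mul_log_polarF [NeZero n] (hsol : IsWeakPSol N Ω p u)
    (hΩ : IsOpen Ω) (hp : 1 < p) (hpn : p < n) (hu : ContDiffOn ℝ 1 u Ω)
    (hc : ContinuousOn u (closure Ω)) (hfrontier : ∀ y ∈ frontier Ω, u y ≤ 0) (hr : 0 < r)
    (hW : ∀ y ∈ closure Ω, r ≤ polarF N (y - x₀)) :
    ∀ y ∈ Ω, u y ≤ (n - p) * Real.log (polarF N (y - x₀) / r) := by
  intro y hy
  have hp0 : 0 < p - 1 := sub_pos.mpr hp
  have hq : 0 < polarF N (y - x₀) / r := div_pos (hr.trans_le (hW y (subset_closure hy))) hr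
  have hle := hsol.wulffPotential_le_exp_neg_div hΩ hp hpn hu hc hfrontier hr hW y hy
  rw [MinkowskiNorm.wulffPotential, ← Real.log_le_iff_le_exp (Real.rpow_pos_of_pos hq _),
    Real.log_rpow hq, neg_mul, div_mul_eq_mul_div, ← neg_div,
    div_le_div_iff_of_pos_right hp0] at hle
  exact neg_le_neg_iff.mp hle

end Bounds

namespace MinkowskiNorm

variable {n : ℕ} (N : MinkowskiNorm n)

theorem F_le_F_of_isInnerNormalAt {s : Set (En n)} {ν x G H : En n} (hν : IsInnerNormalAt s ν x)
    {f g : En n → ℝ} (hf : HasGradientWithinAt f G s x) (hg : HasGradientWithinAt g H s x)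
    (hfx : ∀ y ∈ s, f x ≤ f y) (hgf : ∀ y ∈ s, g x - f x ≤ g y - f y) : N.F G ≤ N.F H := by
  obtain ⟨l, hl, hG⟩ := hν.exists_gradient_eq_smul hf hfx
  have hsub : HasGradientWithinAt (fun y => g y - f y) (H - G) s x := by
    rw [hasGradientWithinAt_iff_hasFDerivWithinAt, map_sub]
    exact hg.hasFDerivWithinAt.sub hf.hasFDerivWithinAt
  obtain ⟨m, hm, hHG⟩ := hν.exists_gradient_eq_smul hsub hgf
  rw [sub_eq_iff_eq_add.mp hHG, hG, ← add_smul, N.homog _ hl, N.homog _ (add_nonneg hm hl)]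
  exact mul_le_mul_of_nonneg_right (le_add_of_nonneg_left hm) (N.F_nonneg ν)

theorem hasGradientAt_mul_log_polarF {r : ℝ} (hr : 0 < r) {x₀ x : En n}
    (hx : polarF N (x - x₀) = r) (c : ℝ) :
    HasGradientAt (fun y => c * Real.log (polarF N (y - x₀) / r))
      ((c / r) • N.polarArgmax (x - x₀)) x := by
  have hne : x ≠ x₀ := fun h => by
    rw [h, sub_self, N.polarF_zero] at hx
    exact hr.ne hx
  have hderiv : HasDerivAt (fun t => c * Real.log (t / r)) (c / r) (polarF N (x - x₀)) := by
    have h := (((hasDerivAt_id' (polarF N (x - x₀))).div_const r).log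
      (by simp [hx, hr.ne'])).const_mul c
    exact h.congr_deriv (by rw [hx, div_self hr.ne', div_one, mul_one_div])
  exact hasGradientAt_comp (f := fun z => polarF N (z - x₀)) hderiv (N.hasGradientAt_polarF_sub hne)

theorem F_gradient_le {f : En n → ℝ} {x : En n} {c : ℝ} (hc : 0 ≤ c)
    (h : ∀ G, HasGradientAt f G x → N.F G ≤ c) : N.F (gradient f x) ≤ c := by
  by_cases hf : DifferentiableAt ℝ f x
  · exact h _ hf.hasGradientAt
  · rwa [gradient_eq_zero_of_not_differentiableAt hf, N.F_zero]

theorem polarF_eq_of_mem_frontier_wulff {r : ℝ} {x₀ x : En n}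
    (hx : x ∈ frontier (Wulff N r x₀)) : polarF N (x - x₀) = r :=
  frontier_lt_subset_eq (N.continuous_polarF_sub x₀) continuous_const hx

theorem le_polarF_of_mem_closure {Ω : Set (En n)} {r : ℝ} {x₀ : En n}
    (hW : Wulff N r x₀ ⊆ Ωᶜ) : ∀ y ∈ closure Ω, r ≤ polarF N (y - x₀) :=
  closure_minimal (t := {y | r ≤ polarF N (y - x₀)})
    (fun y hy => show r ≤ polarF N (y - x₀) from le_of_not_gt fun hlt => hW hlt hy)
    (isClosed_le continuous_const (N.continuous_polarF_sub x₀))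

end MinkowskiNorm

theorem statement12_general {n : ℕ} (N : MinkowskiNorm n) {Ω : Set (En n)} (hΩ : IsOpen Ω)
    {p : ℝ} (hp1 : 1 < p) (hpn : p < n)
    {u : En n → ℝ} (hu : ContDiffOn ℝ 1 u Ω) (hc : ContinuousOn u (closure Ω))
    (hsol : IsWeakPSol N Ω p u) (hbc : ∀ x ∈ frontier Ω, u x = 0)
    (hinfty : ∀ᶠ y in cocompact (En n) ⊓ 𝓟 Ω, 0 ≤ u y)
    {x ν G : En n} (hx : x ∈ frontier Ω) (hν : IsInnerNormalAt Ω ν x)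
    (hG : HasGradientWithinAt u G Ω x) {r : ℝ} (hr : 0 < r) {x₀ : En n}
    (hin : Wulff N r x₀ ⊆ Ωᶜ) (hxW : x ∈ frontier (Wulff N r x₀)) :
    N.F G ≤ (n - p) / r := by
  have : NeZero n := ⟨fun h => by rw [h, Nat.cast_zero] at hpn; linarith⟩
  have hxr : polarF N (x - x₀) = r := N.polarF_eq_of_mem_frontier_wulff hxW
  have hlower : ∀ y ∈ Ω, 0 ≤ u y :=
    hsol.nonneg hΩ hp1 hu hc (fun y hy => (hbc y hy).ge) hinfty
  have hupper : ∀ y ∈ Ω, u y ≤ (n - p) * Real.log (polarF N (y - x₀) / r) :=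
    hsol.le_mul_log_polarF hΩ hp1 hpn hu hc (fun y hy => (hbc y hy).le) hr
      (N.le_polarF_of_mem_closure hin)
  have hlog := (N.hasGradientAt_mul_log_polarF hr hxr (n - p)).hasFDerivAt.hasFDerivWithinAt
    (s := Ω)
  calc N.F G ≤ N.F (((n - p) / r) • N.polarArgmax (x - x₀)) :=
        N.F_le_F_of_isInnerNormalAt hν hG hlog (by simpa [hbc x hx] using hlower)
          (by simpa [hxr, hr.ne', hbc x hx] using hupper)
    _ = (n - p) / r := by
        have hne : x - x₀ ≠ 0 := fun h => hr.ne (by rw [← hxr, h, N.polarF_zero])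
        rw [N.homog _ (div_nonneg (sub_nonneg.mpr hpn.le) hr.le), N.F_polarArgmax hne, mul_one]

/-- Boundary gradient estimate: if `x ∈ ∂Ω` and there is a Wulff shape
`W_r(x₀) ⊆ Ωᶜ` with `x ∈ ∂W_r(x₀)`, then `F(∇u_p(x)) ≤ (n-p)/r`. -/
theorem statement12 (n : ℕ) (N : MinkowskiNorm n)
    (Ω : Set (En n)) (hΩ : IsOpen Ω) (hsb : HasSmoothBoundary Ω)
    (hbd : Bornology.IsBounded Ωᶜ)
    (p : ℝ) (hp1 : 1 < p) (hpn : p < n)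
    (u : En n → ℝ) (hC1 : ContDiffOn ℝ 1 u (closure Ω))
    (hsol : IsWeakPSol N Ω p u)
    (hbc : ∀ x ∈ frontier Ω, u x = 0)
    (hlim : Tendsto u (cocompact (En n)) atTop)
    (x : En n) (hx : x ∈ frontier Ω)
    (r : ℝ) (hr : 0 < r) (x₀ : En n)
    (hin : Wulff N r x₀ ⊆ Ωᶜ) (hxW : x ∈ frontier (Wulff N r x₀)) :
    N.F (gradient u x) ≤ (n - p) / r := by
  obtain ⟨ν, hν⟩ := hsb.exists_isInnerNormalAt hx
  exact N.F_gradient_le (div_nonneg (sub_nonneg.mpr hpn.le) hr.le) fun G hG =>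
    statement12_general N hΩ hp1 hpn (hC1.mono subset_closure) hC1.continuousOn hsol hbc
      ((hlim.eventually_ge_atTop 0).filter_mono inf_le_left) hx hν hG.hasFDerivAt.hasFDerivWithinAt
      hr hin hxW
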